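/- Under the zero-loss hypothesis, the inclusion map TP ↪ F_ε(P) ∪ F_{2ε}(G) of the intersection of the thickened foregrounds into their union is a homotopy equivalence (of topological spaces with the subspace topology from ℝ²). -/

import Mathlib

open Set Metric

noncomputable section

/-- The plane modeled as `Fin 2 → ℝ` with the Pi (sup) norm. -/
abbrev Plane : Type := Fin 2 → ℝ

/-- The Euclidean plane (for Euclidean-norm disks and annuli). -/
abbrev EPlane : Type := EuclideanSpace ℝ (Fin 2)

/-- The closed unit pixel `[i-1,i] × [j-1,j]` for a pixel index `(i,j)`. -/
def pixel (p : ℕ × ℕ) : Set Plane :=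
  {x | x 0 ∈ Set.Icc ((p.1 : ℝ) - 1) (p.1 : ℝ) ∧ x 1 ∈ Set.Icc ((p.2 : ℝ) - 1) (p.2 : ℝ)}

/-- A binary image `S` lies on the `h × w` grid `{1,…,h} × {1,…,w}`. -/
def OnGrid (S : Set (ℕ × ℕ)) (h w : ℕ) : Prop :=
  S ⊆ Set.Icc 1 h ×ˢ Set.Icc 1 w

/-- The foreground `F(S)` of a binary image. -/
def fg (S : Set (ℕ × ℕ)) : Set Plane := ⋃ p ∈ S, pixel p

/-- Closed `ε`-thickening `D_ε(X)` with respect to the sup norm. -/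
def thick (ε : ℝ) (X : Set Plane) : Set Plane := {y | ∃ x ∈ X, ‖x - y‖ ≤ ε}

/-- `C` is a connected component of `A` (as a subset of the plane). -/
def IsCompOf (C A : Set Plane) : Prop := ∃ x ∈ A, C = connectedComponentIn A x

/-- Two subsets share a boundary edge if their closures intersect in an infinite set. -/
def SharesEdge (C D : Set Plane) : Prop := (closure C ∩ closure D).Infinite

/-- `X` strongly deformation retracts onto `A`. -/
def SDR (X A : Set Plane) : Prop :=
  ∃ H : C(↥X × unitInterval, ↥X),
    (∀ x, H (x, 0) = x) ∧ (∀ x, ((H (x, 1) : Plane)) ∈ A) ∧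
    (∀ a : ↥X, (a : Plane) ∈ A → ∀ t, H (a, t) = a)

def TPset (P G : Set (ℕ × ℕ)) (ε : ℝ) : Set Plane := thick ε (fg P) ∩ thick (2 * ε) (fg G)
def TNset (P G : Set (ℕ × ℕ)) (ε : ℝ) : Set Plane := (thick ε (fg P))ᶜ ∩ (thick (2 * ε) (fg G))ᶜ
def FPset (P G : Set (ℕ × ℕ)) (ε : ℝ) : Set Plane := thick ε (fg P) ∩ (thick (2 * ε) (fg G))ᶜ
def FNset (P G : Set (ℕ × ℕ)) (ε : ℝ) : Set Plane := (thick ε (fg P))ᶜ ∩ thick (2 * ε) (fg G)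

/-- A component `C` (of `FP` or `FN`) is regular: exactly one component of `TP` and exactly
one component of `TN` share a boundary edge with it. -/
def RegularComp (P G : Set (ℕ × ℕ)) (ε : ℝ) (C : Set Plane) : Prop :=
  (∃! T : Set Plane, IsCompOf T (TPset P G ε) ∧ SharesEdge T C) ∧
  (∃! T : Set Plane, IsCompOf T (TNset P G ε) ∧ SharesEdge T C)

/-- The zero-loss hypothesis: every component of `FP` and every component of `FN` is regular. -/
def ZeroLoss (P G : Set (ℕ × ℕ)) (ε : ℝ) : Prop :=
  (∀ C : Set Plane, IsCompOf C (FPset P G ε) → RegularComp P G ε C) ∧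
  (∀ C : Set Plane, IsCompOf C (FNset P G ε) → RegularComp P G ε C)

/-! ### Combinatorics of cells -/

abbrev Cell : Type := ℤ × ℤ

def le1 (a b : ℤ) : Prop := a = b ∨ (a % 2 = 0 ∧ (b = a + 1 ∨ b = a - 1))
def lec (c d : Cell) : Prop := le1 c.1 d.1 ∧ le1 c.2 d.2
def isV (c : Cell) : Prop := c.1 % 2 = 0 ∧ c.2 % 2 = 0
def isE (c : Cell) : Prop := (c.1 + c.2) % 2 = 1
def isF (c : Cell) : Prop := c.1 % 2 = 1 ∧ c.2 % 2 = 1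
def en1 (e : Cell) : Cell := if e.1 % 2 = 1 then (e.1 - 1, e.2) else (e.1, e.2 - 1)
def en2 (e : Cell) : Cell := if e.1 % 2 = 1 then (e.1 + 1, e.2) else (e.1, e.2 + 1)
def sd1 (e : Cell) : Cell := if e.1 % 2 = 1 then (e.1, e.2 - 1) else (e.1 - 1, e.2)
def sd2 (e : Cell) : Cell := if e.1 % 2 = 1 then (e.1, e.2 + 1) else (e.1 + 1, e.2)
def bd2 (D : Cell → ZMod 2) (e : Cell) : ZMod 2 := D (sd1 e) + D (sd2 e)
def cb (φ : Cell → ZMod 2) (e : Cell) : ZMod 2 := φ (en1 e) + φ (en2 e)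
def bd1 (z : Cell → ZMod 2) (v : Cell) : ZMod 2 :=
  z (v.1 - 1, v.2) + z (v.1 + 1, v.2) + (z (v.1, v.2 - 1) + z (v.1, v.2 + 1))

lemma lec_refl (c : Cell) : lec c c := ⟨Or.inl rfl, Or.inl rfl⟩

lemma lec_trans {a b c : Cell} (h1 : lec a b) (h2 : lec b c) : lec a c := by
  unfold lec le1 at *; omega

lemma lec_antisymm {a b : Cell} (h1 : lec a b) (h2 : lec b a) : a = b := by
  unfold lec le1 at *; apply Prod.ext <;> omega

lemma cell_trich (c : Cell) : isF c ∨ isE c ∨ isV c := by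
  unfold isF isE isV; omega

lemma en1_lec {e : Cell} (h : isE e) : lec (en1 e) e ∧ isV (en1 e) := by
  unfold isE at h; unfold en1 lec le1 isV; split_ifs <;> dsimp only <;> omega
lemma en2_lec {e : Cell} (h : isE e) : lec (en2 e) e ∧ isV (en2 e) := by
  unfold isE at h; unfold en2 lec le1 isV; split_ifs <;> dsimp only <;> omega
lemma sd1_lec {e : Cell} (h : isE e) : lec e (sd1 e) ∧ isF (sd1 e) := by
  unfold isE at h; unfold sd1 lec le1 isF; split_ifs <;> dsimp only <;> omega
lemma sd2_lec {e : Cell} (h : isE e) : lec e (sd2 e) ∧ isF (sd2 e) := by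
  unfold isE at h; unfold sd2 lec le1 isF; split_ifs <;> dsimp only <;> omega
lemma en_ne (e : Cell) : en1 e ≠ en2 e := by
  unfold en1 en2; split_ifs <;> simp only [ne_eq, Prod.mk.injEq] <;> omega
lemma sd_ne (e : Cell) : sd1 e ≠ sd2 e := by
  unfold sd1 sd2; split_ifs <;> simp only [ne_eq, Prod.mk.injEq] <;> omega

lemma lec_E {e c : Cell} (he : isE e) (h : lec e c) : c = e ∨ c = sd1 e ∨ c = sd2 e := by
  unfold isE at he; unfold lec le1 at h; unfold sd1 sd2
  split_ifs <;> simp only [Prod.ext_iff] <;> omega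

lemma lec_E' {e c : Cell} (he : isE e) (h : lec c e) : c = e ∨ c = en1 e ∨ c = en2 e := by
  unfold isE at he; unfold lec le1 at h; unfold en1 en2
  split_ifs <;> simp only [Prod.ext_iff] <;> omega

lemma isV_not_isE {c : Cell} (h : isV c) : ¬ isE c := by
  unfold isV at h; unfold isE; omega
lemma isF_not_isE {c : Cell} (h : isF c) : ¬ isE c := by
  unfold isF at h; unfold isE; omega
lemma isF_not_isV {c : Cell} (h : isF c) : ¬ isV c := by
  unfold isF at h; unfold isV; omega

lemma z2 (a : ZMod 2) : a + a = 0 := CharTwo.add_self_eq_zero a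
lemma z2_ne {a : ZMod 2} (h : a ≠ 0) : a = 1 := by revert a; decide
lemma z2_eq {a b : ZMod 2} (h : a + b = 0) : a = b := by revert a b; decide

/-- the sum of the coboundary around a face vanishes -/
lemma cb_face (φ : Cell → ZMod 2) {f : Cell} (hf : isF f) :
    cb φ (f.1 - 1, f.2) + cb φ (f.1 + 1, f.2) + cb φ (f.1, f.2 - 1) + cb φ (f.1, f.2 + 1) = 0 := by
  obtain ⟨h1, h2⟩ := hf
  have e1 : ¬ (f.1 - 1) % 2 = 1 := by omega
  have e2 : ¬ (f.1 + 1) % 2 = 1 := by omega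
  simp only [cb, en1, en2, if_neg e1, if_neg e2, if_pos h1]
  generalize φ (f.1 - 1, f.2 - 1) = a
  generalize φ (f.1 - 1, f.2 + 1) = b
  generalize φ (f.1 + 1, f.2 - 1) = c
  generalize φ (f.1 + 1, f.2 + 1) = d
  revert a b c d; decide

/-- Acyclicity mod 2 of the relative complex with cells `T`. -/
structure Acyc (T : Set Cell) : Prop where
  h2 : ∀ D : Cell → ZMod 2, (∀ c, D c ≠ 0 → c ∈ T ∧ isF c) →
    (∀ e ∈ T, isE e → bd2 D e = 0) → ∀ c, D c = 0
  h1 : ∀ z : Cell → ZMod 2, (∀ c, z c ≠ 0 → c ∈ T ∧ isE c) →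
    (∀ v ∈ T, isV v → bd1 z v = 0) →
    ∃ D : Cell → ZMod 2, (∀ c, D c ≠ 0 → c ∈ T ∧ isF c) ∧ ∀ e ∈ T, isE e → bd2 D e = z e
  h0 : ∀ φ : Cell → ZMod 2, (∀ c, φ c ≠ 0 → c ∈ T ∧ isV c) →
    (∀ e ∈ T, isE e → cb φ e = 0) → ∀ c, φ c = 0

def OC (T : Set Cell) : Prop := ∀ a b c, lec a b → lec b c → a ∈ T → c ∈ T → b ∈ T

def FreePair (T : Set Cell) (e f : Cell) : Prop :=
  e ∈ T ∧ f ∈ T ∧ e ≠ f ∧ lec e f ∧ ((isE e ∧ isF f) ∨ (isV e ∧ isE f)) ∧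
    ∀ c ∈ T, lec e c → c = e ∨ c = f

lemma acyc_face_step {T : Set Cell} (hT : Acyc T) (hoc : OC T) {e f g : Cell} (he : isE e)
    (heT : e ∈ T) (hfT : f ∈ T) (hf : isF f) (hef : lec e f) (hgT : g ∉ T)
    (hbd : ∀ D : Cell → ZMod 2, bd2 D e = D f + D g) : Acyc (T \ {e, f}) := by
  have hne : e ≠ f := fun h => isF_not_isE hf (h ▸ he)
  refine ⟨?_, ?_, ?_⟩
  · intro D hD hb
    refine hT.h2 D (fun c hc => ⟨(hD c hc).1.1, (hD c hc).2⟩) ?_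
    intro e' he'T he'
    by_cases h : e' = e
    · subst h
      rw [hbd]
      have a1 : D f = 0 := by
        by_contra h; exact (hD f h).1.2 (by simp)
      have a2 : D g = 0 := by
        by_contra h; exact hgT (hD g h).1.1
      rw [a1, a2, add_zero]
    · refine hb e' ⟨he'T, ?_⟩ he'
      rintro (h' | h')
      · exact h h'
      · exact isF_not_isE hf (h' ▸ he')
  · intro z hz hb
    have hze : z e = 0 := by
      by_contra h; exact (hz e h).1.2 (by simp)
    obtain ⟨D, hD, hDb⟩ := hT.h1 z (fun c hc => ⟨(hz c hc).1.1, (hz c hc).2⟩) (by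
      intro v hv hvv
      refine hb v ⟨hv, ?_⟩ hvv
      rintro (h' | h')
      · exact isV_not_isE hvv (h' ▸ he)
      · exact isF_not_isV hf (h' ▸ hvv))
    have hDf : D f = 0 := by
      have h1 := hDb e heT he
      have a2 : D g = 0 := by
        by_contra h; exact hgT (hD g h).1
      rw [hbd, a2, add_zero, hze] at h1
      exact h1
    refine ⟨D, ?_, fun e' he' hE => hDb e' he'.1 hE⟩
    intro c hc
    refine ⟨⟨(hD c hc).1, ?_⟩, (hD c hc).2⟩
    rintro (h' | h')
    · exact isF_not_isE (hD c hc).2 (h' ▸ he)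
    · have h'' : c = f := h'
      subst h''; exact hc hDf
  · intro φ hφ hc
    refine hT.h0 φ (fun c hc => ⟨(hφ c hc).1.1, (hφ c hc).2⟩) ?_
    have key : ∀ e', isE e' → lec e' f → e' ≠ e → cb φ e' = 0 := by
      intro e' he' hl hne'
      by_cases hmem : e' ∈ T
      · refine hc e' ⟨hmem, ?_⟩ he'
        rintro (h' | h')
        · exact hne' h'
        · exact isF_not_isE hf (h' ▸ he')
      · have a1 : φ (en1 e') = 0 := by
          by_contra h
          exact hmem (hoc _ _ _ (en1_lec he').1 hl (hφ _ h).1.1 hfT)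
        have a2 : φ (en2 e') = 0 := by
          by_contra h
          exact hmem (hoc _ _ _ (en2_lec he').1 hl (hφ _ h).1.1 hfT)
        simp [cb, a1, a2]
    intro e' he'T he'
    by_cases h : e' = e
    · subst h
      have hsum := cb_face φ hf
      have hf' := hf
      obtain ⟨f1, f2⟩ := hf
      have E1 : isE (f.1 - 1, f.2) := by unfold isE; dsimp only; omega
      have E2 : isE (f.1 + 1, f.2) := by unfold isE; dsimp only; omega
      have E3 : isE (f.1, f.2 - 1) := by unfold isE; dsimp only; omega
      have E4 : isE (f.1, f.2 + 1) := by unfold isE; dsimp only; omega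
      have L1 : lec (f.1 - 1, f.2) f := by unfold lec le1; dsimp only; omega
      have L2 : lec (f.1 + 1, f.2) f := by unfold lec le1; dsimp only; omega
      have L3 : lec (f.1, f.2 - 1) f := by unfold lec le1; dsimp only; omega
      have L4 : lec (f.1, f.2 + 1) f := by unfold lec le1; dsimp only; omega
      have hcase : e' = (f.1 - 1, f.2) ∨ e' = (f.1 + 1, f.2) ∨ e' = (f.1, f.2 - 1) ∨
          e' = (f.1, f.2 + 1) := by
        unfold lec le1 at hef; unfold isE at he
        simp only [Prod.ext_iff]; omega
      have K1 := key _ E1 L1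
      have K2 := key _ E2 L2
      have K3 := key _ E3 L3
      have K4 := key _ E4 L4
      rcases hcase with h | h | h | h
      · rw [K2 (by rw [h]; simp [Prod.ext_iff]; omega), K3 (by rw [h]; simp [Prod.ext_iff]),
          K4 (by rw [h]; simp [Prod.ext_iff])] at hsum
        rw [h]; simpa using hsum
      · rw [K1 (by rw [h]; simp [Prod.ext_iff]; omega), K3 (by rw [h]; simp [Prod.ext_iff]),
          K4 (by rw [h]; simp [Prod.ext_iff])] at hsum
        rw [h]; simpa using hsum
      · rw [K1 (by rw [h]; simp [Prod.ext_iff]), K2 (by rw [h]; simp [Prod.ext_iff]),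
          K4 (by rw [h]; simp [Prod.ext_iff]; omega)] at hsum
        rw [h]; simpa using hsum
      · rw [K1 (by rw [h]; simp [Prod.ext_iff]), K2 (by rw [h]; simp [Prod.ext_iff]),
          K3 (by rw [h]; simp [Prod.ext_iff]; omega)] at hsum
        rw [h]; simpa using hsum
    · refine hc e' ⟨he'T, ?_⟩ he'
      rintro (h' | h')
      · exact h h'
      · exact isF_not_isE hf (h' ▸ he')

lemma acyc_step_face {T : Set Cell} (hT : Acyc T) (hoc : OC T) (hF : ∃ f ∈ T, isF f) :
    ∃ e f, FreePair T e f ∧ Acyc (T \ {e, f}) := by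
  classical
  obtain ⟨f0, hf0, hf0F⟩ := hF
  have : ∃ e ∈ T, isE e ∧ bd2 (fun c => if c ∈ T ∧ isF c then 1 else 0) e ≠ 0 := by
    by_contra hcon
    push Not at hcon
    have := hT.h2 (fun c => if c ∈ T ∧ isF c then 1 else 0)
      (fun c hc => by by_contra h; exact hc (if_neg h)) hcon f0
    simp [hf0, hf0F] at this
  obtain ⟨e, heT, he, hb⟩ := this
  have s1 := sd1_lec he
  have s2 := sd2_lec he
  simp only [bd2, s1.2, s2.2, and_true] at hb
  by_cases h1 : sd1 e ∈ T
  · have h2 : sd2 e ∉ T := by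
      intro h2; simp only [h1, h2, if_true] at hb; exact hb (z2 1)
    refine ⟨e, sd1 e, ⟨heT, h1, fun h => isF_not_isE (h ▸ s1.2) he, s1.1, Or.inl ⟨he, s1.2⟩, ?_⟩,
      acyc_face_step hT hoc he heT h1 s1.2 s1.1 h2 (fun D => rfl)⟩
    intro c hc hl
    rcases lec_E he hl with h | h | h
    · exact Or.inl h
    · exact Or.inr h
    · exact absurd (h ▸ hc) h2
  · have h2 : sd2 e ∈ T := by
      by_contra h2; simp only [h1, h2, if_false] at hb; exact hb (z2 0)
    refine ⟨e, sd2 e, ⟨heT, h2, fun h => isF_not_isE (h ▸ s2.2) he, s2.1, Or.inl ⟨he, s2.2⟩, ?_⟩,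
      acyc_face_step hT hoc he heT h2 s2.2 s2.1 h1 (fun D => add_comm _ _)⟩
    intro c hc hl
    rcases lec_E he hl with h | h | h
    · exact Or.inl h
    · exact absurd (h ▸ hc) h1
    · exact Or.inr h


lemma bd1_eq_sum (E : Finset Cell) (hE : ∀ e ∈ E, isE e) (z : Cell → ZMod 2)
    (hz : ∀ c, z c ≠ 0 → c ∈ E) {v : Cell} (hv : isV v) [DecidablePred (lec v)] :
    bd1 z v = ∑ e ∈ E.filter (lec v), z e := by
  classical
  have h1 : bd1 z v = ∑ e ∈ ({(v.1 - 1, v.2), (v.1 + 1, v.2), (v.1, v.2 - 1), (v.1, v.2 + 1)} :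
      Finset Cell), z e := by
    rw [Finset.sum_insert, Finset.sum_insert, Finset.sum_insert, Finset.sum_singleton]
    · unfold bd1; ring
    all_goals simp [Prod.ext_iff] <;> omega
  rw [h1]
  symm
  apply Finset.sum_subset_zero_on_sdiff
  · intro e he
    rw [Finset.mem_filter] at he
    have := hE e he.1
    have h2 := he.2
    unfold isE at this; unfold lec le1 at h2; unfold isV at hv
    simp only [Finset.mem_insert, Finset.mem_singleton, Prod.ext_iff]
    omega
  · intro e he
    rw [Finset.mem_sdiff, Finset.mem_filter] at he
    by_contra hne
    refine he.2 ⟨hz e hne, ?_⟩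
    have h3 := he.1
    simp only [Finset.mem_insert, Finset.mem_singleton, Prod.ext_iff] at h3
    unfold isV at hv; unfold lec le1
    omega
  · intros; rfl

lemma acyc_step_graph {T : Set Cell} (hfin : T.Finite) (hT : Acyc T)
    (hF : ∀ f ∈ T, ¬ isF f) (hne : T.Nonempty) :
    ∃ e f, FreePair T e f ∧ Acyc (T \ {e, f}) := by
  classical
  set E : Finset Cell := hfin.toFinset.filter isE with hEdef
  set V : Finset Cell := hfin.toFinset.filter isV with hVdef
  have memE : ∀ c, c ∈ E ↔ c ∈ T ∧ isE c := fun c => by simp [hEdef]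
  have memV : ∀ c, c ∈ V ↔ c ∈ T ∧ isV c := fun c => by simp [hVdef]
  -- no cycles
  have hcyc : ∀ z : Cell → ZMod 2, (∀ c, z c ≠ 0 → c ∈ T ∧ isE c) →
      (∀ v ∈ T, isV v → bd1 z v = 0) → ∀ c, z c = 0 := by
    intro z hz hb c
    obtain ⟨D, hD, hDb⟩ := hT.h1 z hz hb
    have hD0 : ∀ c, D c = 0 := fun c => by
      by_contra h; exact hF c (hD c h).1 (hD c h).2
    by_contra h
    have := hDb c (hz c h).1 (hz c h).2
    simp only [bd2, hD0, add_zero] at this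
    exact h this.symm
  -- no isolated vertices
  have hiso : ∀ v ∈ V, (E.filter (lec v)).card ≠ 0 := by
    intro v hv h0
    rw [Finset.card_eq_zero, Finset.filter_eq_empty_iff] at h0
    have := hT.h0 (fun c => if c = v then 1 else 0) (by
      intro c hc
      have : c = v := by by_contra h; exact hc (if_neg h)
      rw [this]; exact (memV v).1 hv) (by
      intro e he heE
      have hl := h0 ((memE e).2 ⟨he, heE⟩)
      have a1 : en1 e ≠ v := fun h => hl (h ▸ (en1_lec heE).1)
      have a2 : en2 e ≠ v := fun h => hl (h ▸ (en2_lec heE).1)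
      simp [cb, a1, a2]) v
    simp at this
  have hVbelow : ∀ e ∈ E, (V.filter (fun v => lec v e)).card ≤ 2 := by
    intro e he
    refine le_trans (Finset.card_le_card (t := {en1 e, en2 e}) ?_) Finset.card_le_two
    intro v hv
    rw [Finset.mem_filter] at hv
    have hE := ((memE e).1 he).2
    rcases lec_E' hE hv.2 with h | h | h
    · exact absurd (h ▸ hE) (isV_not_isE ((memV v).1 hv.1).2)
    · simp [h]
    · simp [h]
  have hleaf : ∃ v ∈ V, (E.filter (lec v)).card = 1 := by
    by_contra hcon
    push Not at hcon
    have hdeg : ∀ v ∈ V, 2 ≤ (E.filter (lec v)).card := by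
      intro v hv
      have := hiso v hv
      have := hcon v hv
      omega
    -- E.card ≤ V.card
    have hEV : E.card ≤ V.card := by
      let ext : ({x // x ∈ E} → ZMod 2) → Cell → ZMod 2 :=
        fun z c => if h : c ∈ E then z ⟨c, h⟩ else 0
      have hinj : Function.Injective (fun (z : {x // x ∈ E} → ZMod 2) (v : {x // x ∈ V}) =>
          bd1 (ext z) v.1) := by
        intro z1 z2' heq
        have hz := hcyc (fun c => ext z1 c + ext z2' c) (by
          intro c hc
          by_contra h
          rw [← memE] at h
          apply hc
          simp [ext, h]) (by
          intro v hv hvV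
          have := congrFun heq ⟨v, (memV v).2 ⟨hv, hvV⟩⟩
          dsimp only at this
          have h2 : bd1 (fun c => ext z1 c + ext z2' c) v = bd1 (ext z1) v + bd1 (ext z2') v := by
            unfold bd1; ring
          rw [h2, this, z2])
        funext e
        have := z2_eq (hz e.1)
        simpa [ext, e.2] using this
      have := Fintype.card_le_of_injective _ hinj
      simp only [Fintype.card_fun, ZMod.card, Fintype.card_coe] at this
      exact (Nat.pow_le_pow_iff_right (by norm_num)).1 this
    have hdc : ∑ v ∈ V, (E.filter (lec v)).card = ∑ e ∈ E, (V.filter (fun v => lec v e)).card :=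
      Finset.sum_card_bipartiteAbove_eq_sum_card_bipartiteBelow lec
    have hle : ∑ e ∈ E, (V.filter (fun v => lec v e)).card ≤ E.card * 2 :=
      Finset.sum_le_card_nsmul _ _ _ hVbelow
    have hsum2 : ∑ v ∈ V, (E.filter (lec v)).card = ∑ v ∈ V, 2 := by
      apply le_antisymm
      · rw [Finset.sum_const, smul_eq_mul]; omega
      · exact Finset.sum_le_sum hdeg
    have hdeg2 : ∀ v ∈ V, 2 = (E.filter (lec v)).card :=
      (Finset.sum_eq_sum_iff_of_le hdeg).1 hsum2.symm
    have hz := hcyc (fun c => if c ∈ E then 1 else 0) (by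
      intro c hc
      rw [← memE]
      by_contra h; exact hc (if_neg h)) (by
      intro v hv hvV
      have hvm := (memV v).2 ⟨hv, hvV⟩
      rw [bd1_eq_sum E (fun e he => ((memE e).1 he).2) _ (by
        intro c hc
        by_contra h; exact hc (if_neg h)) hvV]
      rw [Finset.sum_congr rfl (g := fun _ => 1) (by
        intro e he
        simp [(Finset.mem_filter.1 he).1])]
      rw [Finset.sum_const, ← hdeg2 v hvm]
      decide)
    have hE0 : E = ∅ := by
      rw [Finset.eq_empty_iff_forall_notMem]
      intro e he
      have := hz e
      simp [he] at this
    obtain ⟨c, hc⟩ := hne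
    rcases cell_trich c with h | h | h
    · exact hF c hc h
    · have := (memE c).2 ⟨hc, h⟩
      simp [hE0] at this
    · have := hdeg c ((memV c).2 ⟨hc, h⟩)
      simp [hE0] at this
  obtain ⟨v, hv, hcard⟩ := hleaf
  rw [Finset.card_eq_one] at hcard
  obtain ⟨e, he⟩ := hcard
  have huniq : ∀ e', e' ∈ T → isE e' → lec v e' → e' = e := by
    intro e' h1 h2 h3
    have : e' ∈ E.filter (lec v) := Finset.mem_filter.2 ⟨(memE _).2 ⟨h1, h2⟩, h3⟩
    rw [he] at this
    simpa using this
  have hee : e ∈ E.filter (lec v) := by rw [he]; simp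
  rw [Finset.mem_filter, memE] at hee
  obtain ⟨⟨heT, heE⟩, hve⟩ := hee
  obtain ⟨hvT, hvV⟩ := (memV v).1 hv
  have hvne : v ≠ e := fun h => isV_not_isE hvV (h ▸ heE)
  refine ⟨v, e, ⟨hvT, heT, hvne, hve, Or.inr ⟨hvV, heE⟩, ?_⟩, ⟨?_, ?_, ?_⟩⟩
  · intro c hc hl
    rcases cell_trich c with h | h | h
    · exact absurd h (hF c hc)
    · exact Or.inr (huniq c hc h hl)
    · left
      unfold isV at h hvV; unfold lec le1 at hl
      apply Prod.ext <;> omega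
  · intro D hD _ c
    by_contra h; exact hF c (hD c h).1.1 (hD c h).2
  · intro z hz hb
    have hz0 := hcyc z (fun c hc => ⟨(hz c hc).1.1, (hz c hc).2⟩) (by
      intro w hw hwV
      by_cases hwv : w = v
      · subst hwv
        rw [bd1_eq_sum E (fun e he => ((memE e).1 he).2) _ (by
          intro c hc
          exact (memE c).2 ⟨(hz c hc).1.1, (hz c hc).2⟩) hwV, he, Finset.sum_singleton]
        by_contra h; exact (hz e h).1.2 (by simp)
      · refine hb w ⟨hw, ?_⟩ hwV
        rintro (h | h)
        · exact hwv h
        · exact isV_not_isE hwV (h ▸ heE))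
    refine ⟨fun _ => 0, fun c hc => absurd rfl hc, ?_⟩
    intro e' _ _
    simp [bd2, hz0]
  · intro φ hφ hc
    -- the other end
    have hw : ∃ w, w ≠ v ∧ ∀ ψ : Cell → ZMod 2, cb ψ e = ψ v + ψ w := by
      rcases lec_E' heE hve with h | h | h
      · exact absurd h hvne
      · exact ⟨en2 e, fun h' => en_ne e (by rw [h', h]), fun ψ => by rw [h]; rfl⟩
      · exact ⟨en1 e, fun h' => en_ne e (by rw [h', h]), fun ψ => by rw [h]; exact add_comm _ _⟩
    obtain ⟨w, hwv, hw⟩ := hw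
    have hφv : φ v = 0 := by
      by_contra h; exact (hφ v h).1.2 (by simp)
    have h0 := hT.h0 (fun c => if c = v then φ w else φ c) (by
      intro c hc'
      by_cases h : c = v
      · rw [h]; exact ⟨hvT, hvV⟩
      · rw [if_neg h] at hc'
        exact ⟨(hφ c hc').1.1, (hφ c hc').2⟩) (by
      intro e' he' he'E
      by_cases hh : e' = e
      · rw [hh, hw]
        simp [hwv, z2]
      · have a1 : en1 e' ≠ v := fun h => hh (huniq e' he' he'E (h ▸ (en1_lec he'E).1))
        have a2 : en2 e' ≠ v := fun h => hh (huniq e' he' he'E (h ▸ (en2_lec he'E).1))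
        have := hc e' ⟨he', by
          rintro (h | h)
          · exact isV_not_isE hvV (h ▸ he'E)
          · exact hh h⟩ he'E
        simpa [cb, a1, a2] using this)
    intro c
    by_cases h : c = v
    · rw [h]; exact hφv
    · simpa [h] using h0 c

lemma acyc_step {T : Set Cell} (hfin : T.Finite) (hT : Acyc T) (hoc : OC T) (hne : T.Nonempty) :
    ∃ e f, FreePair T e f ∧ Acyc (T \ {e, f}) := by
  by_cases hF : ∃ f ∈ T, isF f
  · exact acyc_step_face hT hoc hF
  · push Not at hF
    exact acyc_step_graph hfin hT hF hne

def Dn (K : Set Cell) : Prop := ∀ c d, lec c d → d ∈ K → c ∈ K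

/-- Induction along collapses. -/
lemma collapse_induction (L : Set Cell) (hL : Dn L) (Q : Set Cell → Prop) (h0 : Q L)
    (hstep : ∀ K e f, Dn K → Dn (K \ {e, f}) → FreePair (K \ L) e f →
      (∀ c ∈ K, lec e c → c = e ∨ c = f) → L ⊆ K → Q (K \ {e, f}) → Q K) :
    ∀ n : ℕ, ∀ K, Dn K → L ⊆ K → (K \ L).Finite → (K \ L).ncard = n → Acyc (K \ L) → Q K := by
  intro n
  induction n using Nat.strong_induction_on with
  | _ n ih =>
  intro K hK hLK hfin hcard hac
  by_cases hne : (K \ L).Nonempty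
  · have hoc : OC (K \ L) := by
      intro a b c hab hbc ha hc
      exact ⟨hK b c hbc hc.1, fun hb => ha.2 (hL a b hab hb)⟩
    obtain ⟨e, f, hfree, hac'⟩ := acyc_step hfin hac hoc hne
    obtain ⟨heT, hfT, hef, hl, hty, hmax⟩ := id hfree
    have hfreeK : ∀ c ∈ K, lec e c → c = e ∨ c = f := by
      intro c hc hlc
      exact hmax c ⟨hc, fun h => heT.2 (hL e c hlc h)⟩ hlc
    have hDn' : Dn (K \ {e, f}) := by
      intro c d hcd hd
      refine ⟨hK c d hcd hd.1, ?_⟩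
      rintro (h | h)
      · have h' : c = e := h
        subst h'
        exact hd.2 (hfreeK d hd.1 hcd)
      · have h' : c = f := h
        subst h'
        exact hd.2 (hfreeK d hd.1 (lec_trans hl hcd))
    have heq : (K \ {e, f}) \ L = (K \ L) \ {e, f} := by
      ext c; simp only [mem_sdiff]; tauto
    refine hstep K e f hK hDn' hfree hfreeK hLK ?_
    refine ih _ ?_ (K \ {e, f}) hDn' ?_ (hfin.subset ?_) rfl (heq ▸ hac')
    · rw [heq, ← hcard]
      apply Set.ncard_lt_ncard _ hfin
      refine ⟨sdiff_subset, fun h => ?_⟩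
      exact (h heT).2 (by simp)
    · intro c hc
      refine ⟨hLK hc, ?_⟩
      rintro (h | h)
      · have h' : c = e := h
        exact heT.2 (h' ▸ hc)
      · have h' : c = f := h
        exact hfT.2 (h' ▸ hc)
    · rw [heq]; exact sdiff_subset
  · have : K = L := by
      apply Subset.antisymm _ hLK
      intro c hc
      by_contra h
      exact hne ⟨c, hc, h⟩
    rw [this]; exact h0


/-! ### Homotopy equivalences from collapses -/

def Good (Y X : Set Plane) : Prop :=
  ∃ E : ContinuousMap.HomotopyEquiv ↥Y ↥X, ∀ x : ↥Y, ((E.toFun x : Plane)) = (x : Plane)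

lemma good_refl (X : Set Plane) : Good X X :=
  ⟨ContinuousMap.HomotopyEquiv.refl _, fun _ => rfl⟩

lemma good_trans {X Y Z : Set Plane} (h1 : Good X Y) (h2 : Good Y Z) : Good X Z := by
  obtain ⟨E1, h1⟩ := h1
  obtain ⟨E2, h2⟩ := h2
  refine ⟨E1.trans E2, fun x => ?_⟩
  have := h2 (E1.toFun x)
  rw [h1] at this
  exact this

lemma good_of_retract {X Y R : Set Plane} (hX : X = Y ∪ R) (hY : IsClosed Y) (hR : IsClosed R)
    (hconv : Convex ℝ R) (r : Plane → Plane) (hr : ContinuousOn r R)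
    (hmap : ∀ x ∈ R, r x ∈ R ∧ r x ∈ Y) (hid : ∀ x ∈ R, x ∈ Y → r x = x) : Good Y X := by
  classical
  set ρ : Plane → Plane := fun x => if x ∈ R then r x else x with hρ
  have hρY : ∀ x ∈ Y, ρ x = x := by
    intro x hx
    by_cases h : x ∈ R
    · simp only [hρ, if_pos h]; exact hid x h hx
    · simp only [hρ, if_neg h]
  have hρR : ∀ x ∈ R, ρ x = r x := fun x hx => by simp only [hρ, if_pos hx]
  have hcont : ContinuousOn ρ X := by
    rw [hX]
    apply ContinuousOn.union_of_isClosed _ _ hY hR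
    · exact continuousOn_id.congr hρY
    · exact hr.congr hρR
  have hYX : Y ⊆ X := hX ▸ subset_union_left
  have hρX : ∀ x ∈ X, ρ x ∈ Y := by
    intro x hx
    rw [hX] at hx
    by_cases h : x ∈ R
    · rw [hρR x h]; exact (hmap x h).2
    · rcases hx with hx | hx
      · rw [hρY x hx]; exact hx
      · exact absurd hx h
  have hseg : ∀ x ∈ X, ∀ t : unitInterval, (1 - (t : ℝ)) • x + (t : ℝ) • ρ x ∈ X := by
    intro x hx t
    by_cases h : x ∈ R
    · rw [hX]; right
      exact hconv h (by rw [hρR x h]; exact (hmap x h).1) (by linarith [t.2.2]) t.2.1 (by ring)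
    · have hxY : x ∈ Y := by
        rw [hX] at hx; exact hx.resolve_right h
      rw [hρY x hxY, ← add_smul]
      simpa using hx
  have hcr : Continuous (fun x : ↥X => ρ x) := continuousOn_iff_continuous_domRestrict.1 hcont
  let i : C(↥Y, ↥X) := ⟨fun y => ⟨y.1, hYX y.2⟩, by fun_prop⟩
  let s : C(↥X, ↥Y) := ⟨fun x => ⟨ρ x.1, hρX x.1 x.2⟩, by
    exact hcr.subtype_mk _⟩
  refine ⟨⟨i, s, ?_, ?_⟩, fun x => rfl⟩
  · have : s.comp i = ContinuousMap.id _ := by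
      ext1 y
      apply Subtype.ext
      exact hρY y.1 y.2
    rw [this]
  · apply ContinuousMap.Homotopic.symm
    refine ⟨⟨⟨fun p => ⟨(1 - (p.1 : ℝ)) • (p.2 : Plane) + (p.1 : ℝ) • ρ p.2, hseg p.2 p.2.2 p.1⟩, ?_⟩,
      ?_, ?_⟩⟩
    · apply Continuous.subtype_mk
      have h2 : Continuous (fun p : unitInterval × ↥X => ρ p.2) := hcr.comp continuous_snd
      have h3 : Continuous (fun p : unitInterval × ↥X => (p.1 : ℝ)) := by fun_prop
      have h4 : Continuous (fun p : unitInterval × ↥X => (p.2 : Plane)) := by fun_prop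
      exact ((continuous_const.sub h3).smul h4).add (h3.smul h2)
    · intro x
      apply Subtype.ext
      simp
    · intro x
      apply Subtype.ext
      simp [i, s]

lemma rect_retract (a b : Fin 2) (hab : a ≠ b) (l m p q : ℝ) (hlm : l < m) (hpq : p ≠ q) :
    ∃ r : Plane → Plane, Continuous r ∧
      (∀ x : Plane, x a ∈ Icc l m → x b ∈ uIcc p q → r x a ∈ Icc l m ∧ r x b ∈ uIcc p q ∧
        (r x a = l ∨ r x a = m ∨ r x b = p)) ∧
      (∀ x : Plane, x a ∈ Icc l m → x b ∈ uIcc p q → (x a = l ∨ x a = m ∨ x b = p) → r x = x) := by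
  have hY : ∀ y : ℝ, y ∈ uIcc p q ↔ 0 ≤ (y - p) / (q - p) ∧ (y - p) / (q - p) ≤ 1 := by
    intro y
    rcases lt_or_gt_of_ne hpq with h | h
    · rw [uIcc_of_le h.le, mem_Icc]
      have : 0 < q - p := by linarith
      rw [le_div_iff₀ this, div_le_iff₀ this]
      constructor <;> rintro ⟨h1, h2⟩ <;> constructor <;> linarith
    · rw [uIcc_of_ge h.le, mem_Icc]
      have : q - p < 0 := by linarith
      rw [le_div_iff_of_neg this, div_le_iff_of_neg this]
      constructor <;> rintro ⟨h1, h2⟩ <;> constructor <;> linarith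
  have hqp : q - p ≠ 0 := sub_ne_zero.2 hpq.symm
  have hml : (0 : ℝ) < m - l := by linarith
  have hX : ∀ y : ℝ, y ∈ Icc l m ↔ |(2 * y - l - m) / (m - l)| ≤ 1 := by
    intro y
    rw [abs_le, le_div_iff₀ hml, div_le_iff₀ hml, mem_Icc]
    constructor <;> rintro ⟨h1, h2⟩ <;> constructor <;> linarith
  -- normalised coordinates
  let X : Plane → ℝ := fun x => (2 * x a - l - m) / (m - l)
  let Y : Plane → ℝ := fun x => (x b - p) / (q - p)
  have hXx : ∀ x, x a = ((m - l) * X x + l + m) / 2 := by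
    intro x; simp only [X]; field_simp; ring
  have hYx : ∀ x, x b = (q - p) * Y x + p := by
    intro x; simp only [Y]; field_simp; ring
  let s : Plane → ℝ := fun x => max (max |X x| ((2 - Y x) / 2)) (1 / 2)
  have hs : ∀ x, 0 < s x := fun x => lt_of_lt_of_le (by norm_num) (le_max_right _ _)
  let r : Plane → Plane := fun x k =>
    if k = a then ((m - l) * (X x / s x) + l + m) / 2 else (q - p) * (2 - (2 - Y x) / s x) + p
  have hra : ∀ x, r x a = ((m - l) * (X x / s x) + l + m) / 2 := fun x => by simp [r]
  have hrb : ∀ x, r x b = (q - p) * (2 - (2 - Y x) / s x) + p := fun x => by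
    simp [r, hab.symm]
  have hrX : ∀ x, X (r x) = X x / s x := by
    intro x; simp only [X, hra]; field_simp; ring
  have hrY : ∀ x, Y (r x) = 2 - (2 - Y x) / s x := by
    intro x; simp only [Y, hrb]; field_simp; ring
  have hXc : Continuous X := by fun_prop
  have hYc : Continuous Y := by fun_prop
  have hsc : Continuous s := by fun_prop
  refine ⟨r, ?_, ?_, ?_⟩
  · apply continuous_pi
    intro k
    by_cases hk : k = a
    · simp only [r, hk, if_true]
      have := hXc.div hsc (fun x => (hs x).ne')
      exact (((continuous_const.mul this).add continuous_const).add continuous_const).div_const 2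
    · simp only [r, hk, if_false]
      have h1 : Continuous fun x => 2 - Y x := by fun_prop
      have := h1.div hsc (fun x => (hs x).ne')
      exact (continuous_const.mul (continuous_const.sub this)).add continuous_const
  · intro x hxa hxb
    rw [hX] at hxa
    rw [hY] at hxb
    change |X x| ≤ 1 at hxa
    change 0 ≤ Y x ∧ Y x ≤ 1 at hxb
    have hs' : s x = max |X x| ((2 - Y x) / 2) := by
      apply max_eq_left
      apply le_max_of_le_right; linarith
    have hs1 : |X x| ≤ s x := hs' ▸ le_max_left _ _
    have hs2 : (2 - Y x) / 2 ≤ s x := hs' ▸ le_max_right _ _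
    have hs3 : s x ≤ 2 - Y x := by rw [hs']; apply max_le <;> linarith
    rw [hX, hY]
    change |X (r x)| ≤ 1 ∧ (0 ≤ Y (r x) ∧ Y (r x) ≤ 1) ∧ _
    rw [hrX, hrY]
    have hsp := hs x
    refine ⟨?_, ⟨?_, ?_⟩, ?_⟩
    · rw [abs_div, abs_of_pos hsp, div_le_one hsp]; exact hs1
    · have : (2 - Y x) / s x ≤ 2 := by rw [div_le_iff₀ hsp]; linarith
      linarith
    · have : 1 ≤ (2 - Y x) / s x := by rw [le_div_iff₀ hsp]; linarith
      linarith
    · rcases le_total |X x| ((2 - Y x) / 2) with h | h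
      · right; right
        rw [max_eq_right h] at hs'
        rw [hrb, hs']
        have : (2 - Y x) ≠ 0 := by linarith
        field_simp
        ring
      · rw [max_eq_left h] at hs'
        have hX0 : X x ≠ 0 := by
          intro h0; rw [hs', h0, abs_zero] at hsp; exact lt_irrefl _ hsp
        rcases le_total 0 (X x) with h0 | h0
        · right; left
          rw [hra, hs', abs_of_nonneg h0, div_self hX0]; ring
        · left
          rw [hra, hs', abs_of_nonpos h0, div_neg, div_self hX0]; ring
  · intro x hxa hxb hor
    rw [hX] at hxa
    rw [hY] at hxb
    change |X x| ≤ 1 at hxa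
    change 0 ≤ Y x ∧ Y x ≤ 1 at hxb
    have hs1 : s x = 1 := by
      apply le_antisymm
      · apply max_le _ (by norm_num)
        apply max_le hxa; linarith
      · rcases hor with h | h | h
        · have : X x = -1 := by simp only [X, h]; field_simp; ring
          apply le_max_of_le_left; apply le_max_of_le_left
          rw [this]; norm_num
        · have : X x = 1 := by simp only [X, h]; field_simp; ring
          apply le_max_of_le_left; apply le_max_of_le_left
          rw [this]; norm_num
        · have : Y x = 0 := by simp only [Y, h]; simp
          apply le_max_of_le_left; apply le_max_of_le_right
          rw [this]; norm_num
    funext k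
    by_cases hk : k = a
    · rw [hk, hra, hs1, hXx x]; simp
    · have : k = b := by omega
      rw [this, hrb, hs1, hYx x]; simp


/-! ### Grids in the plane -/

structure Grid where
  u : ℤ → ℝ
  k : ℝ → ℤ
  hle : ∀ x i, k x ≤ 2 * i ↔ x ≤ u i
  hge : ∀ x i, 2 * i ≤ k x ↔ u i ≤ x
  mono : StrictMono u

namespace Grid
variable (g : Grid)

def κ (x : Plane) : Cell := (g.k (x 0), g.k (x 1))
def real (S : Set Cell) : Set Plane := {x | g.κ x ∈ S}

lemma k_even (x : ℝ) (i : ℤ) : g.k x = 2 * i ↔ x = g.u i := by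
  rw [le_antisymm_iff, le_antisymm_iff, g.hle, g.hge]

lemma hlt (x : ℝ) (i : ℤ) : g.k x < 2 * i ↔ x < g.u i := by
  rw [← not_le, ← not_le, g.hge]
lemma hgt (x : ℝ) (i : ℤ) : 2 * i < g.k x ↔ g.u i < x := by
  rw [← not_le, ← not_le, g.hle]

lemma k_odd (x : ℝ) (i : ℤ) : g.k x = 2 * i + 1 ↔ g.u i < x ∧ x < g.u (i + 1) := by
  rw [← hgt, ← hlt]; omega

lemma le1_even (x : ℝ) (i : ℤ) : le1 (g.k x) (2 * i) ↔ x = g.u i := by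
  rw [← k_even]; unfold le1; omega

lemma le1_odd (x : ℝ) (i : ℤ) : le1 (g.k x) (2 * i + 1) ↔ g.u i ≤ x ∧ x ≤ g.u (i + 1) := by
  rw [← hge, ← hle]; unfold le1; omega

lemma even_or_odd' (a : ℤ) : (∃ i, a = 2 * i) ∨ ∃ i, a = 2 * i + 1 := by
  rcases Int.even_or_odd' a with ⟨i, h | h⟩
  · exact Or.inl ⟨i, h⟩
  · exact Or.inr ⟨i, h⟩

lemma k_mono : Monotone g.k := by
  intro x y hxy
  rcases even_or_odd' (g.k x) with ⟨i, hi⟩ | ⟨i, hi⟩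
  · rw [hi, hge]
    rw [k_even] at hi
    rw [← hi]; exact hxy
  · have h2 := (g.k_odd x i).1 hi
    have := (g.hgt y i).2 (by linarith [h2.1])
    omega

lemma star1 (x : ℝ) : ∀ᶠ y in nhds x, le1 (g.k x) (g.k y) := by
  rcases even_or_odd' (g.k x) with ⟨i, hi⟩ | ⟨i, hi⟩
  · have hx := (g.k_even x i).1 hi
    have h1 : g.u (i - 1) < x := by rw [hx]; exact g.mono (by omega)
    have h2 : x < g.u (i + 1) := by rw [hx]; exact g.mono (by omega)
    filter_upwards [Ioo_mem_nhds h1 h2] with y hy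
    have a1 := (g.hgt y _).2 hy.1
    have a2 := (g.hlt y _).2 hy.2
    unfold le1; omega
  · have hx := (g.k_odd x i).1 hi
    filter_upwards [Ioo_mem_nhds hx.1 hx.2] with y hy
    left
    rw [hi, eq_comm, k_odd]; exact hy

lemma star (x : Plane) : ∀ᶠ y in nhds x, lec (g.κ x) (g.κ y) := by
  have h0 : Filter.Tendsto (fun y : Plane => y 0) (nhds x) (nhds (x 0)) :=
    (continuous_apply 0).tendsto x
  have h1 : Filter.Tendsto (fun y : Plane => y 1) (nhds x) (nhds (x 1)) :=
    (continuous_apply 1).tendsto x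
  filter_upwards [h0.eventually (g.star1 (x 0)), h1.eventually (g.star1 (x 1))] with y a b
  exact ⟨a, b⟩

lemma isOpen_real {S : Set Cell} (hS : ∀ c d, lec c d → c ∈ S → d ∈ S) : IsOpen (g.real S) := by
  rw [isOpen_iff_mem_nhds]
  intro x hx
  filter_upwards [g.star x] with y hy
  exact hS _ _ hy hx

lemma isClosed_real {S : Set Cell} (hS : Dn S) : IsClosed (g.real S) := by
  rw [← isOpen_compl_iff]
  exact g.isOpen_real (S := Sᶜ) (fun c d hcd hc hd => hc (hS c d hcd hd))

lemma exists_k (a : ℤ) : ∃ x, g.k x = a := by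
  rcases even_or_odd' a with ⟨i, hi⟩ | ⟨i, hi⟩
  · exact ⟨g.u i, by rw [hi, k_even]⟩
  · have : g.u i < g.u (i + 1) := g.mono (by omega)
    exact ⟨(g.u i + g.u (i + 1)) / 2, by rw [hi, k_odd]; constructor <;> linarith⟩

lemma exists_pt (c : Cell) : ∃ x, g.κ x = c := by
  obtain ⟨a, ha⟩ := g.exists_k c.1
  obtain ⟨b, hb⟩ := g.exists_k c.2
  exact ⟨![a, b], by simp [κ, ha, hb]⟩

def pt (c : Cell) : Plane := (g.exists_pt c).choose
lemma κ_pt (c : Cell) : g.κ (g.pt c) = c := (g.exists_pt c).choose_spec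

lemma convex_prod (A B : Set ℤ) (hA : OrdConnected A) (hB : OrdConnected B) :
    Convex ℝ (g.real (A ×ˢ B)) := by
  have key : ∀ S : Set ℤ, OrdConnected S → Convex ℝ (g.k ⁻¹' S) := fun S hS =>
    (hS.preimage_mono g.k_mono).convex
  have : g.real (A ×ˢ B) = Set.pi univ (fun i : Fin 2 => if i = 0 then g.k ⁻¹' A else g.k ⁻¹' B) := by
    ext x
    simp [real, κ, Fin.forall_fin_two]
  rw [this]
  apply convex_pi
  intro i _
  split_ifs
  · exact key A hA
  · exact key B hB

lemma le1_pair_ord {a b : ℤ} (h : le1 a b) : OrdConnected ({a, b} : Set ℤ) := by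
  rw [ordConnected_iff]
  intro x hx y hy hxy z hz
  simp only [mem_insert_iff, mem_singleton_iff, mem_Icc] at *
  unfold le1 at h
  omega

lemma closedcell_convex (f : Cell) : Convex ℝ (g.real {c | lec c f}) := by
  have : {c | lec c f} = {a | le1 a f.1} ×ˢ {b | le1 b f.2} := by ext c; rfl
  rw [this]
  have key : ∀ b, OrdConnected {a | le1 a b} := by
    intro b
    rw [ordConnected_iff]
    intro x hx y hy hxy z hz
    simp only [mem_ofPred_eq, mem_Icc] at *
    unfold le1 at *
    omega
  exact g.convex_prod _ _ (key _) (key _)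

lemma box_preconnected {c d : Cell} (h : lec c d) :
    IsPreconnected (g.real (({c.1, d.1} : Set ℤ) ×ˢ ({c.2, d.2} : Set ℤ))) :=
  (g.convex_prod _ _ (le1_pair_ord h.1) (le1_pair_ord h.2)).isPreconnected

lemma closure1 {x : ℝ} {d : ℤ} (h : le1 (g.k x) d) : x ∈ closure (g.k ⁻¹' {d}) := by
  rcases even_or_odd' d with ⟨i, hi⟩ | ⟨i, hi⟩
  · apply subset_closure
    subst hi
    rw [le1_even, ← k_even] at h
    exact h
  · subst hi
    rw [le1_odd] at h
    have : g.k ⁻¹' {2 * i + 1} = Ioo (g.u i) (g.u (i + 1)) := by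
      ext y; exact g.k_odd y i
    rw [this, closure_Ioo (g.mono (by omega)).ne]
    exact h

lemma mem_closure_cell {x : Plane} {d : Cell} (h : lec (g.κ x) d) : x ∈ closure (g.real {d}) := by
  have : g.real {d} =
      Set.pi univ (fun i : Fin 2 => if i = 0 then g.k ⁻¹' {d.1} else g.k ⁻¹' {d.2}) := by
    ext x
    simp [real, κ, Fin.forall_fin_two, Prod.ext_iff]
  rw [this, closure_pi_set]
  intro i _
  fin_cases i
  · exact g.closure1 h.1
  · exact g.closure1 h.2

lemma edge_infinite {e : Cell} (he : isE e) : (g.real {e}).Infinite := by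
  have key : ∀ i : ℤ, (g.k ⁻¹' {2 * i + 1}).Infinite := by
    intro i
    have : g.k ⁻¹' {2 * i + 1} = Ioo (g.u i) (g.u (i + 1)) := by
      ext y; exact g.k_odd y i
    rw [this]
    exact Ioo_infinite (g.mono (by omega))
  obtain ⟨a, ha⟩ := g.exists_k e.1
  obtain ⟨b, hb⟩ := g.exists_k e.2
  rcases even_or_odd' e.1 with ⟨i, hi⟩ | ⟨i, hi⟩
  · have : e.2 = 2 * (e.2 / 2) + 1 := by unfold isE at he; omega
    have h1 : InjOn (fun t : ℝ => (![a, t] : Plane)) (g.k ⁻¹' {2 * (e.2 / 2) + 1}) := by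
      intro s _ t _ hst
      have := congrFun hst 1
      simpa using this
    apply ((key (e.2 / 2)).image h1).mono
    rintro _ ⟨t, ht, rfl⟩
    rw [← this] at ht
    simp only [mem_preimage, mem_singleton_iff] at ht
    simp [real, κ, ha, ht]
  · have h1 : InjOn (fun t : ℝ => (![t, b] : Plane)) (g.k ⁻¹' {2 * i + 1}) := by
      intro s _ t _ hst
      have := congrFun hst 0
      simpa using this
    apply ((key i).image h1).mono
    rintro _ ⟨t, ht, rfl⟩
    rw [← hi] at ht
    simp only [mem_preimage, mem_singleton_iff] at ht
    simp [real, κ, hb, ht]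

lemma vertex_unique {x y : Plane} (h : g.κ x = g.κ y) (hv : isV (g.κ x)) : x = y := by
  have key : ∀ s t : ℝ, g.k s = g.k t → g.k s % 2 = 0 → s = t := by
    intro s t hst h0
    have h1 : g.k s = 2 * (g.k s / 2) := by omega
    have h2 : g.k t = 2 * (g.k s / 2) := by omega
    rw [k_even] at h1 h2
    rw [h1]; exact h2.symm
  have hp := Prod.ext_iff.1 h
  funext i
  fin_cases i
  · exact key _ _ hp.1 hv.1
  · exact key _ _ hp.2 hv.2

/-- elementary collapses give homotopy equivalences -/
lemma good_collapse {K : Set Cell} {e f : Cell} (hK : Dn K) (hK' : Dn (K \ {e, f}))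
    (hfK : f ∈ K) (hef : lec e f) (hty : (isE e ∧ isF f) ∨ (isV e ∧ isE f)) :
    Good (g.real (K \ {e, f})) (g.real K) := by
  have hX : g.real K = g.real (K \ {e, f}) ∪ g.real {c | lec c f} := by
    ext x
    simp only [real, mem_ofPred_eq, mem_union, mem_sdiff, mem_insert_iff, mem_singleton_iff]
    constructor
    · intro hx
      by_cases h : g.κ x = e ∨ g.κ x = f
      · right
        rcases h with h | h
        · rw [h]; exact hef
        · rw [h]; exact lec_refl f
      · exact Or.inl ⟨hx, h⟩
    · rintro (h | h)
      · exact h.1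
      · exact hK _ _ h hfK
  have hDnf : Dn {c | lec c f} := fun c d hcd hd => lec_trans hcd hd
  have main : ∀ r : Plane → Plane, Continuous r →
      (∀ x, lec (g.κ x) f → lec (g.κ (r x)) f ∧ g.κ (r x) ≠ e ∧ g.κ (r x) ≠ f) →
      (∀ x, lec (g.κ x) f → g.κ x ≠ e → g.κ x ≠ f → r x = x) →
      Good (g.real (K \ {e, f})) (g.real K) := by
    intro r hr h1 h2
    refine good_of_retract hX (g.isClosed_real hK') (g.isClosed_real hDnf) (g.closedcell_convex f)
      r hr.continuousOn ?_ ?_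
    · intro x hx
      have := h1 x hx
      exact ⟨this.1, hK _ _ this.1 hfK, by simp [this.2.1, this.2.2]⟩
    · intro x hx hxY
      have := hxY.2
      simp only [mem_insert_iff, mem_singleton_iff, not_or] at this
      exact h2 x hx this.1 this.2
  rcases hty with ⟨he, hf⟩ | ⟨he, hf⟩
  · obtain ⟨i, hi⟩ : ∃ i, f.1 = 2 * i + 1 := ⟨f.1 / 2, by unfold isF at hf; omega⟩
    obtain ⟨j, hj⟩ : ∃ j, f.2 = 2 * j + 1 := ⟨f.2 / 2, by unfold isF at hf; omega⟩
    obtain ⟨f1, f2⟩ := f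
    dsimp only at hi hj
    subst hi hj
    have hui : g.u i < g.u (i + 1) := g.mono (by omega)
    have huj : g.u j < g.u (j + 1) := g.mono (by omega)
    have hR : ∀ x : Plane, lec (g.κ x) (2 * i + 1, 2 * j + 1) ↔
        x 0 ∈ Icc (g.u i) (g.u (i + 1)) ∧ x 1 ∈ Icc (g.u j) (g.u (j + 1)) := by
      intro x
      exact and_congr (g.le1_odd _ _) (g.le1_odd _ _)
    have hcase : e = (2 * i, 2 * j + 1) ∨ e = (2 * (i + 1), 2 * j + 1) ∨
        e = (2 * i + 1, 2 * j) ∨ e = (2 * i + 1, 2 * (j + 1)) := by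
      unfold isE at he; unfold lec le1 at hef
      simp only [Prod.ext_iff] at *
      omega
    have hk0 : ∀ x : Plane, ∀ a b : ℤ, g.κ x = (a, b) ↔ g.k (x 0) = a ∧ g.k (x 1) = b := by
      intro x a b; simp [κ]
    rcases hcase with rfl | rfl | rfl | rfl
    · obtain ⟨r, hr, h1, h2⟩ := rect_retract 1 0 (by decide) _ _ (g.u (i + 1)) (g.u i) huj hui.ne'
      rw [uIcc_of_ge hui.le] at h1 h2
      refine main r hr ?_ ?_
      · intro x hx
        rw [hR] at hx
        obtain ⟨a1, a2, a3⟩ := h1 x hx.2 hx.1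
        refine ⟨(hR _).2 ⟨a2, a1⟩, ?_, ?_⟩
        · rw [Ne, hk0, k_even, k_odd]
          rintro ⟨b1, b2, b3⟩
          rcases a3 with a3 | a3 | a3 <;> linarith
        · rw [Ne, hk0, k_odd, k_odd]
          rintro ⟨⟨b0, b1⟩, b2, b3⟩
          rcases a3 with a3 | a3 | a3 <;> linarith
      · intro x hx n1 n2
        rw [hR] at hx
        refine h2 x hx.2 hx.1 ?_
        by_contra! hcon
        obtain ⟨c1, c2, c3⟩ := hcon
        have d1 := lt_of_le_of_ne hx.2.1 c1.symm
        have d2 := lt_of_le_of_ne hx.2.2 c2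
        have d3 := lt_of_le_of_ne hx.1.2 c3
        rcases hx.1.1.eq_or_lt with h | h
        · exact n1 ((hk0 _ _ _).2 ⟨(g.k_even _ _).2 h.symm, (g.k_odd _ _).2 ⟨d1, d2⟩⟩)
        · exact n2 ((hk0 _ _ _).2 ⟨(g.k_odd _ _).2 ⟨h, d3⟩, (g.k_odd _ _).2 ⟨d1, d2⟩⟩)
    · obtain ⟨r, hr, h1, h2⟩ := rect_retract 1 0 (by decide) _ _ (g.u i) (g.u (i + 1)) huj hui.ne
      rw [uIcc_of_le hui.le] at h1 h2
      refine main r hr ?_ ?_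
      · intro x hx
        rw [hR] at hx
        obtain ⟨a1, a2, a3⟩ := h1 x hx.2 hx.1
        refine ⟨(hR _).2 ⟨a2, a1⟩, ?_, ?_⟩
        · rw [Ne, hk0, k_even, k_odd]
          rintro ⟨b1, b2, b3⟩
          rcases a3 with a3 | a3 | a3 <;> linarith
        · rw [Ne, hk0, k_odd, k_odd]
          rintro ⟨⟨b0, b1⟩, b2, b3⟩
          rcases a3 with a3 | a3 | a3 <;> linarith
      · intro x hx n1 n2
        rw [hR] at hx
        refine h2 x hx.2 hx.1 ?_
        by_contra! hcon
        obtain ⟨c1, c2, c3⟩ := hcon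
        have d1 := lt_of_le_of_ne hx.2.1 c1.symm
        have d2 := lt_of_le_of_ne hx.2.2 c2
        have d3 := lt_of_le_of_ne hx.1.1 c3.symm
        rcases hx.1.2.eq_or_lt with h | h
        · exact n1 ((hk0 _ _ _).2 ⟨(g.k_even _ _).2 h, (g.k_odd _ _).2 ⟨d1, d2⟩⟩)
        · exact n2 ((hk0 _ _ _).2 ⟨(g.k_odd _ _).2 ⟨d3, h⟩, (g.k_odd _ _).2 ⟨d1, d2⟩⟩)
    · obtain ⟨r, hr, h1, h2⟩ := rect_retract 0 1 (by decide) _ _ (g.u (j + 1)) (g.u j) hui huj.ne'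
      rw [uIcc_of_ge huj.le] at h1 h2
      refine main r hr ?_ ?_
      · intro x hx
        rw [hR] at hx
        obtain ⟨a1, a2, a3⟩ := h1 x hx.1 hx.2
        refine ⟨(hR _).2 ⟨a1, a2⟩, ?_, ?_⟩
        · rw [Ne, hk0, k_even, k_odd]
          rintro ⟨⟨b1, b2⟩, b3⟩
          rcases a3 with a3 | a3 | a3 <;> linarith
        · rw [Ne, hk0, k_odd, k_odd]
          rintro ⟨⟨b0, b1⟩, b2, b3⟩
          rcases a3 with a3 | a3 | a3 <;> linarith
      · intro x hx n1 n2
        rw [hR] at hx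
        refine h2 x hx.1 hx.2 ?_
        by_contra! hcon
        obtain ⟨c1, c2, c3⟩ := hcon
        have d1 := lt_of_le_of_ne hx.1.1 c1.symm
        have d2 := lt_of_le_of_ne hx.1.2 c2
        have d3 := lt_of_le_of_ne hx.2.2 c3
        rcases hx.2.1.eq_or_lt with h | h
        · exact n1 ((hk0 _ _ _).2 ⟨(g.k_odd _ _).2 ⟨d1, d2⟩, (g.k_even _ _).2 h.symm⟩)
        · exact n2 ((hk0 _ _ _).2 ⟨(g.k_odd _ _).2 ⟨d1, d2⟩, (g.k_odd _ _).2 ⟨h, d3⟩⟩)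
    · obtain ⟨r, hr, h1, h2⟩ := rect_retract 0 1 (by decide) _ _ (g.u j) (g.u (j + 1)) hui huj.ne
      rw [uIcc_of_le huj.le] at h1 h2
      refine main r hr ?_ ?_
      · intro x hx
        rw [hR] at hx
        obtain ⟨a1, a2, a3⟩ := h1 x hx.1 hx.2
        refine ⟨(hR _).2 ⟨a1, a2⟩, ?_, ?_⟩
        · rw [Ne, hk0, k_even, k_odd]
          rintro ⟨⟨b1, b2⟩, b3⟩
          rcases a3 with a3 | a3 | a3 <;> linarith
        · rw [Ne, hk0, k_odd, k_odd]
          rintro ⟨⟨b0, b1⟩, b2, b3⟩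
          rcases a3 with a3 | a3 | a3 <;> linarith
      · intro x hx n1 n2
        rw [hR] at hx
        refine h2 x hx.1 hx.2 ?_
        by_contra! hcon
        obtain ⟨c1, c2, c3⟩ := hcon
        have d1 := lt_of_le_of_ne hx.1.1 c1.symm
        have d2 := lt_of_le_of_ne hx.1.2 c2
        have d3 := lt_of_le_of_ne hx.2.1 c3.symm
        rcases hx.2.2.eq_or_lt with h | h
        · exact n1 ((hk0 _ _ _).2 ⟨(g.k_odd _ _).2 ⟨d1, d2⟩, (g.k_even _ _).2 h⟩)
        · exact n2 ((hk0 _ _ _).2 ⟨(g.k_odd _ _).2 ⟨d1, d2⟩, (g.k_odd _ _).2 ⟨d3, h⟩⟩)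
  · have hw : ∃ w, isV w ∧ lec w f ∧ w ≠ e ∧ ∀ c, lec c f → c = e ∨ c = f ∨ c = w := by
      rcases lec_E' hf hef with h | h | h
      · exact absurd (h ▸ hf) (isV_not_isE he)
      · refine ⟨en2 f, (en2_lec hf).2, (en2_lec hf).1, fun h' => en_ne f (by rw [h', h]), ?_⟩
        intro c hc
        rcases lec_E' hf hc with h' | h' | h'
        · tauto
        · left; rw [h', h]
        · tauto
      · refine ⟨en1 f, (en1_lec hf).2, (en1_lec hf).1, fun h' => en_ne f (by rw [h', h]), ?_⟩
        intro c hc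
        rcases lec_E' hf hc with h' | h' | h'
        · tauto
        · tauto
        · left; rw [h', h]
    obtain ⟨w, hwV, hwf, hwe, hcl⟩ := hw
    refine main (fun _ => g.pt w) continuous_const ?_ ?_
    · intro x hx
      rw [g.κ_pt]
      exact ⟨hwf, hwe, fun h => isV_not_isE hwV (h ▸ hf)⟩
    · intro x hx n1 n2
      have : g.κ x = w := by
        rcases hcl _ hx with h | h | h
        · exact absurd h n1
        · exact absurd h n2
        · exact h
      apply g.vertex_unique
      · rw [g.κ_pt, this]
      · rw [g.κ_pt]; exact hwV

/-- Relative acyclicity implies that the inclusion is a homotopy equivalence. -/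
theorem good_of_acyc {K L : Set Cell} (hK : Dn K) (hL : Dn L) (hLK : L ⊆ K)
    (hfin : (K \ L).Finite) (hac : Acyc (K \ L)) : Good (g.real L) (g.real K) := by
  refine collapse_induction L hL (fun K => Good (g.real L) (g.real K)) (good_refl _) ?_
    _ K hK hLK hfin rfl hac
  intro K e f hK hK' hfree _ _ hQ
  exact good_trans hQ (g.good_collapse hK hK' hfree.2.1.1 hfree.2.2.2.1 hfree.2.2.2.2.1)

end Grid


/-! ### Local constancy and components -/

def bot2 (c : Cell) : Cell := (c.1 - c.1 % 2, c.2 - c.2 % 2)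
def top2 (c : Cell) : Cell := (c.1 + (1 - c.1 % 2), c.2 + (1 - c.2 % 2))
def Up (K : Set Cell) : Prop := ∀ c d, lec c d → c ∈ K → d ∈ K

lemma bot2_lec (c : Cell) : lec (bot2 c) c ∧ isV (bot2 c) := by
  unfold bot2 lec le1 isV; dsimp only; omega
lemma top2_lec (c : Cell) : lec c (top2 c) ∧ isF (top2 c) := by
  unfold top2 lec le1 isF; dsimp only; omega
lemma bot2_V {c : Cell} (h : isV c) : bot2 c = c := by
  unfold isV at h; unfold bot2; apply Prod.ext <;> dsimp only <;> omega
lemma top2_F {c : Cell} (h : isF c) : top2 c = c := by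
  unfold isF at h; unfold top2; apply Prod.ext <;> dsimp only <;> omega

lemma vconst {α : Type*} {K : Set Cell} (hK : Dn K) (ψ : Cell → α)
    (h : ∀ e ∈ K, isE e → ψ (en1 e) = ψ (en2 e)) {v d : Cell} (hd : d ∈ K) (hvd : lec v d)
    (hv : isV v) : ψ v = ψ (bot2 d) := by
  obtain ⟨v1, v2⟩ := v
  obtain ⟨d1, d2⟩ := d
  unfold lec le1 at hvd
  unfold isV at hv
  dsimp only at hvd hv
  have s1 : ψ (v1, v2) = ψ (v1, d2 - d2 % 2) := by
    by_cases hc : v2 = d2 - d2 % 2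
    · rw [← hc]
    · have hodd : d2 % 2 = 1 := by omega
      have hE : isE (v1, d2) := by unfold isE; dsimp only; omega
      have := h (v1, d2) (hK _ (d1, d2) (by unfold lec le1; dsimp only; omega) hd) hE
      have hn : ¬ v1 % 2 = 1 := by omega
      simp only [en1, en2, if_neg hn] at this
      have e1 : d2 - d2 % 2 = d2 - 1 := by omega
      have e2 : v2 = d2 + 1 := by omega
      rw [e1, e2, this]
  have s2 : ψ (v1, d2 - d2 % 2) = ψ (d1 - d1 % 2, d2 - d2 % 2) := by
    by_cases hc : v1 = d1 - d1 % 2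
    · rw [← hc]
    · have hodd : d1 % 2 = 1 := by omega
      have hE : isE (d1, d2 - d2 % 2) := by unfold isE; dsimp only; omega
      have := h _ (hK _ (d1, d2) (by unfold lec le1; dsimp only; omega) hd) hE
      simp only [en1, en2, if_pos hodd] at this
      have e1 : d1 - d1 % 2 = d1 - 1 := by omega
      have e2 : v1 = d1 + 1 := by omega
      rw [e1, e2, this]
  rw [s1, s2]; rfl

lemma bot_const {α : Type*} {K : Set Cell} (hK : Dn K) (ψ : Cell → α)
    (h : ∀ e ∈ K, isE e → ψ (en1 e) = ψ (en2 e)) {c d : Cell} (hd : d ∈ K) (hcd : lec c d) :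
    ψ (bot2 c) = ψ (bot2 d) :=
  vconst hK ψ h hd (lec_trans (bot2_lec c).1 hcd) (bot2_lec c).2

lemma fconst {α : Type*} {U : Set Cell} (hU : Up U) (D : Cell → α)
    (h : ∀ e ∈ U, isE e → D (sd1 e) = D (sd2 e)) {c f : Cell} (hc : c ∈ U) (hcf : lec c f)
    (hf : isF f) : D f = D (top2 c) := by
  obtain ⟨c1, c2⟩ := c
  obtain ⟨f1, f2⟩ := f
  unfold lec le1 at hcf
  unfold isF at hf
  dsimp only at hcf hf
  have s1 : D (f1, f2) = D (f1, c2 + (1 - c2 % 2)) := by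
    by_cases hcc : f2 = c2 + (1 - c2 % 2)
    · rw [← hcc]
    · have hE : isE (f1, c2) := by unfold isE; dsimp only; omega
      have := h (f1, c2) (hU (c1, c2) _ (by unfold lec le1; dsimp only; omega) hc) hE
      simp only [sd1, sd2, if_pos hf.1] at this
      have e1 : c2 + (1 - c2 % 2) = c2 + 1 := by omega
      have e2 : f2 = c2 - 1 := by omega
      rw [e1, e2, this]
  have s2 : D (f1, c2 + (1 - c2 % 2)) = D (c1 + (1 - c1 % 2), c2 + (1 - c2 % 2)) := by
    by_cases hcc : f1 = c1 + (1 - c1 % 2)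
    · rw [← hcc]
    · have hE : isE (c1, c2 + (1 - c2 % 2)) := by unfold isE; dsimp only; omega
      have := h _ (hU (c1, c2) _ (by unfold lec le1; dsimp only; omega) hc) hE
      have hn : ¬ c1 % 2 = 1 := by omega
      simp only [sd1, sd2, if_neg hn] at this
      have e1 : c1 + (1 - c1 % 2) = c1 + 1 := by omega
      have e2 : f1 = c1 - 1 := by omega
      rw [e1, e2, this]
  rw [s1, s2]; rfl

lemma top_const {α : Type*} {U : Set Cell} (hU : Up U) (D : Cell → α)
    (h : ∀ e ∈ U, isE e → D (sd1 e) = D (sd2 e)) {c d : Cell} (hc : c ∈ U) (hcd : lec c d) :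
    D (top2 c) = D (top2 d) :=
  (fconst hU D h hc (lec_trans hcd (top2_lec d).1) (top2_lec d).2).symm

namespace Grid
variable (g : Grid)

lemma comp_const {α : Type} {S : Set Cell} (φ : Cell → α)
    (h : ∀ c ∈ S, ∀ d ∈ S, lec c d → φ c = φ d) {C : Set Plane} (hC : IsPreconnected C)
    (hCS : C ⊆ g.real S) {x y : Plane} (hx : x ∈ C) (hy : y ∈ C) : φ (g.κ x) = φ (g.κ y) := by
  let _ : TopologicalSpace α := ⊥
  have : DiscreteTopology α := ⟨rfl⟩
  have hc : ContinuousOn (fun x => φ (g.κ x)) C := by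
    intro x hx
    have : (fun _ : Plane => φ (g.κ x)) =ᶠ[nhdsWithin x C] fun x => φ (g.κ x) := by
      filter_upwards [nhdsWithin_le_nhds (g.star x), self_mem_nhdsWithin] with y hy hyC
      exact h _ (hCS hx) _ (hCS hyC) hy
    exact tendsto_const_nhds.congr' this
  exact hC.constant hc hx hy

def cc (S : Set Cell) (x : Plane) : Set Plane := connectedComponentIn (g.real S) x

lemma cc_eq {S : Set Cell} (hS : OC S) {x y : Plane} (hx : g.κ x ∈ S) (hy : g.κ y ∈ S)
    (h : lec (g.κ x) (g.κ y)) : g.cc S x = g.cc S y := by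
  apply connectedComponentIn_eq
  have hb := g.box_preconnected h
  refine hb.subset_connectedComponentIn (x := x) ?_ ?_ ?_
  · simp [real]
  · intro z hz
    obtain ⟨h1, h2⟩ := hz
    simp only [mem_insert_iff, mem_singleton_iff] at h1 h2
    refine hS (g.κ x) (g.κ z) (g.κ y) ?_ ?_ hx hy
    · constructor
      · rcases h1 with h1 | h1 <;> rw [h1]
        · exact Or.inl rfl
        · exact h.1
      · rcases h2 with h2 | h2 <;> rw [h2]
        · exact Or.inl rfl
        · exact h.2
    · constructor
      · rcases h1 with h1 | h1 <;> rw [h1]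
        · exact h.1
        · exact Or.inl rfl
      · rcases h2 with h2 | h2 <;> rw [h2]
        · exact h.2
        · exact Or.inl rfl
  · simp [real]

lemma cell_sub_cc {S : Set Cell} (hS : OC S) {x : Plane} (hx : g.κ x ∈ S) :
    g.real {g.κ x} ⊆ g.cc S x := by
  intro y hy
  have hy' : g.κ y = g.κ x := hy
  rw [g.cc_eq hS hx (hy' ▸ hx) (by rw [hy']; exact lec_refl _)]
  exact mem_connectedComponentIn (by change g.κ y ∈ S; rw [hy']; exact hx)

lemma shares {S1 S2 : Set Cell} (h1 : OC S1) (h2 : OC S2) {x y : Plane} (hx : g.κ x ∈ S1)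
    (hy : g.κ y ∈ S2) (hE : isE (g.κ x)) (h : lec (g.κ x) (g.κ y)) :
    SharesEdge (g.cc S1 x) (g.cc S2 y) := by
  apply (g.edge_infinite hE).mono
  intro z hz
  refine ⟨subset_closure (g.cell_sub_cc h1 hx hz), closure_mono (g.cell_sub_cc h2 hy) ?_⟩
  apply g.mem_closure_cell
  have : g.κ z = g.κ x := hz
  rw [this]; exact h

end Grid

/-! ### Pairs of transverse subcomplexes -/

def InvX (A : Set Cell) (m : ℤ) : Prop := ∀ n m', le1 m m' → ((m, n) ∈ A ↔ (m', n) ∈ A)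
def InvY (A : Set Cell) (n : ℤ) : Prop := ∀ m n', le1 n n' → ((m, n) ∈ A ↔ (m, n') ∈ A)

structure Cfg (A B : Set Cell) : Prop where
  dnA : Dn A
  dnB : Dn B
  finA : A.Finite
  finB : B.Finite
  regA : ∀ c ∈ A, ∃ f ∈ A, isF f ∧ lec c f
  regB : ∀ c ∈ B, ∃ f ∈ B, isF f ∧ lec c f
  trX : ∀ m, InvX A m ∨ InvX B m
  trY : ∀ m, InvY A m ∨ InvY B m

lemma Cfg.symm {A B : Set Cell} (h : Cfg A B) : Cfg B A :=
  ⟨h.dnB, h.dnA, h.finB, h.finA, h.regB, h.regA, fun m => (h.trX m).symm, fun m => (h.trY m).symm⟩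

lemma Cfg.corner {A B : Set Cell} (h : Cfg A B) {v e : Cell} (hv : v ∈ A ∩ B) (hvV : isV v)
    (he : e ∈ A \ B) (heE : isE e) (hve : lec v e) :
    ∃ e' f, e' ∈ A ∩ B ∧ isE e' ∧ lec v e' ∧ f ∈ A \ B ∧ lec e' f ∧ lec e f := by
  obtain ⟨v1, v2⟩ := v
  obtain ⟨p, q⟩ := e
  unfold isV at hvV
  unfold isE at heE
  dsimp only at hvV heE
  have hl := hve
  unfold lec at hl
  dsimp only at hl
  have hcase : (v2 = q ∧ p % 2 = 1) ∨ (v1 = p ∧ q % 2 = 1) := by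
    unfold le1 at hl; omega
  rcases hcase with ⟨rfl, hp⟩ | ⟨rfl, hq⟩
  · have hB : ¬ InvX B v1 := fun hi => he.2 ((hi v2 p hl.1).1 hv.2)
    have hA := (h.trX v1).resolve_right hB
    have fin : ∀ b, le1 v2 b → b % 2 = 1 → (v1, b) ∈ A → (v1, b) ∈ B →
        ∃ e' f, e' ∈ A ∩ B ∧ isE e' ∧ lec (v1, v2) e' ∧ f ∈ A \ B ∧ lec e' f ∧ lec (p, v2) f := by
      intro b hb hb1 h1 h2
      refine ⟨(v1, b), (p, b), ⟨h1, h2⟩, ?_, ⟨Or.inl rfl, hb⟩, ⟨(hA b p hl.1).1 h1, ?_⟩,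
        ⟨hl.1, Or.inl rfl⟩, ⟨Or.inl rfl, hb⟩⟩
      · unfold isE; dsimp only; omega
      · exact fun hB' => he.2 (h.dnB (p, v2) (p, b) ⟨Or.inl rfl, hb⟩ hB')
    rcases h.trY v2 with hy | hy
    · obtain ⟨f, hf, hfF, hvf⟩ := h.regB _ hv.2
      exact fin f.2 hvf.2 hfF.2 ((hy v1 f.2 hvf.2).1 hv.1) (h.dnB _ f ⟨hvf.1, Or.inl rfl⟩ hf)
    · obtain ⟨f, hf, hfF, hvf⟩ := h.regA _ hv.1
      exact fin f.2 hvf.2 hfF.2 (h.dnA _ f ⟨hvf.1, Or.inl rfl⟩ hf) ((hy v1 f.2 hvf.2).1 hv.2)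
  · have hB : ¬ InvY B v2 := fun hi => he.2 ((hi v1 q hl.2).1 hv.2)
    have hA := (h.trY v2).resolve_right hB
    have fin : ∀ b, le1 v1 b → b % 2 = 1 → (b, v2) ∈ A → (b, v2) ∈ B →
        ∃ e' f, e' ∈ A ∩ B ∧ isE e' ∧ lec (v1, v2) e' ∧ f ∈ A \ B ∧ lec e' f ∧ lec (v1, q) f := by
      intro b hb hb1 h1 h2
      refine ⟨(b, v2), (b, q), ⟨h1, h2⟩, ?_, ⟨hb, Or.inl rfl⟩, ⟨(hA b q hl.2).1 h1, ?_⟩,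
        ⟨Or.inl rfl, hl.2⟩, ⟨hb, Or.inl rfl⟩⟩
      · unfold isE; dsimp only; omega
      · exact fun hB' => he.2 (h.dnB (v1, q) (b, q) ⟨hb, Or.inl rfl⟩ hB')
    rcases h.trX v1 with hy | hy
    · obtain ⟨f, hf, hfF, hvf⟩ := h.regB _ hv.2
      exact fin f.1 hvf.1 hfF.1 ((hy v2 f.1 hvf.1).1 hv.1) (h.dnB _ f ⟨Or.inl rfl, hvf.2⟩ hf)
    · obtain ⟨f, hf, hfF, hvf⟩ := h.regA _ hv.1
      exact fin f.1 hvf.1 hfF.1 (h.dnA _ f ⟨Or.inl rfl, hvf.2⟩ hf) ((hy v2 f.1 hvf.1).1 hv.2)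

lemma Cfg.cross {A B : Set Cell} (h : Cfg A B) {m d : Cell} (hm : m ∈ A ∩ B) (hmd : lec m d)
    (hdA : d ∉ A) (hdB : d ∉ B) : isV m := by
  obtain ⟨a, b⟩ := m
  obtain ⟨a', b'⟩ := d
  obtain ⟨h1, h2⟩ := hmd
  dsimp only at h1 h2
  by_contra hV
  unfold isV at hV
  dsimp only at hV
  have hcase : a = a' ∨ b = b' := by unfold le1 at h1 h2; omega
  rcases hcase with rfl | rfl
  · rcases h.trY b with hy | hy
    · exact hdA ((hy a b' h2).1 hm.1)
    · exact hdB ((hy a b' h2).1 hm.2)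
  · rcases h.trX a with hy | hy
    · exact hdA ((hy b a' h1).1 hm.1)
    · exact hdB ((hy b a' h1).1 hm.2)


/-! ### The relative homology vanishes -/

def Reg (g : Grid) (A B : Set Cell) : Prop := ∀ C, IsCompOf C (g.real (A \ B)) →
  (∃! T : Set Plane, IsCompOf T (g.real (A ∩ B)) ∧ SharesEdge T C) ∧
  (∃! T : Set Plane, IsCompOf T (g.real (Aᶜ ∩ Bᶜ)) ∧ SharesEdge T C)

lemma H0half (g : Grid) {A B : Set Cell} (h : Cfg A B) (hr : Reg g A B) (φ : Cell → ZMod 2)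
    (hφ : ∀ c, φ c ≠ 0 → c ∈ (A ∪ B) \ (A ∩ B) ∧ isV c)
    (hc : ∀ e ∈ (A ∪ B) \ (A ∩ B), isE e → cb φ e = 0) :
    ∀ v ∈ A \ B, isV v → φ v = 0 := by
  intro v hv hvV
  have hDnK : Dn (A ∪ B) := by
    rintro c d hcd (hd | hd)
    · exact Or.inl (h.dnA c d hcd hd)
    · exact Or.inr (h.dnB c d hcd hd)
  have hDnL : Dn (A ∩ B) := fun c d hcd hd => ⟨h.dnA c d hcd hd.1, h.dnB c d hcd hd.2⟩
  have hφL : ∀ c ∈ A ∩ B, φ c = 0 := by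
    intro c hcL
    by_contra hne
    exact (hφ c hne).1.2 hcL
  have hcon : ∀ e ∈ A ∪ B, isE e → φ (en1 e) = φ (en2 e) := by
    intro e he heE
    by_cases hL : e ∈ A ∩ B
    · rw [hφL _ (hDnL _ _ (en1_lec heE).1 hL), hφL _ (hDnL _ _ (en2_lec heE).1 hL)]
    · exact z2_eq (hc e ⟨he, hL⟩ heE)
  have hx : g.pt v ∈ g.real (A \ B) := by change g.κ (g.pt v) ∈ A \ B; rw [g.κ_pt]; exact hv
  set C := connectedComponentIn (g.real (A \ B)) (g.pt v) with hC
  obtain ⟨T, ⟨hT, hS⟩, -⟩ := (hr C ⟨_, hx, rfl⟩).1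
  obtain ⟨y, hyT, hyC⟩ := hS.nonempty
  have hCA : closure C ⊆ g.real A :=
    closure_minimal ((connectedComponentIn_subset _ _).trans fun z hz => hz.1)
      (g.isClosed_real h.dnA)
  have hTL : closure T ⊆ g.real (A ∩ B) := by
    obtain ⟨x0, _, rfl⟩ := hT
    exact closure_minimal (connectedComponentIn_subset _ _) (g.isClosed_real hDnL)
  have := g.comp_const (S := A ∪ B) (fun c => φ (bot2 c))
    (fun c _ d hd hcd => bot_const hDnK φ hcon hd hcd)
    (C := closure C) isPreconnected_connectedComponentIn.closure
    (fun z hz => Or.inl (hCA hz)) (subset_closure (mem_connectedComponentIn hx)) hyC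
  rw [g.κ_pt] at this
  try dsimp only at this
  rw [bot2_V hvV] at this
  rw [this]
  exact hφL _ (hDnL _ _ (bot2_lec _).1 (hTL hyT))

lemma H2half (g : Grid) {A B : Set Cell} (h : Cfg A B) (hr : Reg g A B) (D : Cell → ZMod 2)
    (hD : ∀ c, D c ≠ 0 → c ∈ (A ∪ B) \ (A ∩ B) ∧ isF c)
    (hb : ∀ e ∈ (A ∪ B) \ (A ∩ B), isE e → bd2 D e = 0) :
    ∀ f ∈ A \ B, isF f → D f = 0 := by
  intro f hf hfF
  have hUp : Up Bᶜ := fun c d hcd hc hd => hc (h.dnB c d hcd hd)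
  have hD0 : ∀ c, c ∉ A → c ∉ B → D c = 0 := by
    intro c h1 h2
    by_contra hne
    rcases (hD c hne).1.1 with h' | h'
    · exact h1 h'
    · exact h2 h'
  have hcon : ∀ e ∈ Bᶜ, isE e → D (sd1 e) = D (sd2 e) := by
    intro e he heE
    by_cases hA : e ∈ A
    · exact z2_eq (hb e ⟨Or.inl hA, fun h' => he h'.2⟩ heE)
    · have l1 := (sd1_lec heE).1
      have l2 := (sd2_lec heE).1
      rw [hD0 _ (fun h' => hA (h.dnA _ _ l1 h')) (fun h' => he (h.dnB _ _ l1 h')),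
        hD0 _ (fun h' => hA (h.dnA _ _ l2 h')) (fun h' => he (h.dnB _ _ l2 h'))]
  have hx : g.pt f ∈ g.real (A \ B) := by change g.κ (g.pt f) ∈ A \ B; rw [g.κ_pt]; exact hf
  set C := connectedComponentIn (g.real (A \ B)) (g.pt f) with hC
  obtain ⟨N, ⟨hN, hS⟩, -⟩ := (hr C ⟨_, hx, rfl⟩).2
  have hfin : {y | isV (g.κ y) ∧ g.κ y ∈ A}.Finite := by
    apply Set.Finite.of_finite_image (f := g.κ) (h.finA.subset _)
    · intro y hy y' _ heq
      exact g.vertex_unique heq hy.1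
    · rintro _ ⟨y, hy, rfl⟩
      exact hy.2
  obtain ⟨y, ⟨hyC, hyN⟩, hyV⟩ := (hS.sdiff hfin).nonempty.imp (fun _ hh => hh) |>.imp fun _ hh =>
    (⟨⟨hh.1.2, hh.1.1⟩, hh.2⟩ : (_ ∧ _) ∧ _)
  have hCA : closure C ⊆ g.real A :=
    closure_minimal ((connectedComponentIn_subset _ _).trans fun z hz => hz.1)
      (g.isClosed_real h.dnA)
  have hyA : g.κ y ∈ A := hCA hyC
  have hNs : N ⊆ g.real (Aᶜ ∩ Bᶜ) := by
    obtain ⟨x0, _, rfl⟩ := hN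
    exact connectedComponentIn_subset _ _
  obtain ⟨w, hw, hwN⟩ := mem_closure_iff_nhds.1 hyN _ (g.star y)
  have hw' : lec (g.κ y) (g.κ w) := hw
  have hwA : g.κ w ∉ A := (hNs hwN).1
  have hwB : g.κ w ∉ B := (hNs hwN).2
  have hyB : g.κ y ∉ B := fun hyB => hyV ⟨h.cross ⟨hyA, hyB⟩ hw' hwA hwB, hyA⟩
  have hpre : IsPreconnected (insert y C) :=
    isPreconnected_connectedComponentIn.subset_closure (subset_insert _ _)
      (insert_subset hyC subset_closure)
  have hsub : insert y C ⊆ g.real Bᶜ :=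
    insert_subset hyB ((connectedComponentIn_subset _ _).trans fun z hz => hz.2)
  have := g.comp_const (S := Bᶜ) (fun c => D (top2 c))
    (fun c hc d _ hcd => top_const hUp D hcon hc hcd) hpre hsub
    (mem_insert_of_mem _ (mem_connectedComponentIn hx)) (mem_insert _ _)
  rw [g.κ_pt] at this
  try dsimp only at this
  rw [top2_F hfF] at this
  rw [this, top_const hUp D hcon hyB hw']
  have l := (top2_lec (g.κ w)).1
  exact hD0 _ (fun h' => hwA (h.dnA _ _ l h')) (fun h' => hwB (h.dnB _ _ l h'))

/-- every mod 2 cycle of the plane grid which is bounded below bounds -/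
lemma fill (Z : Cell → ZMod 2) (hZ : ∀ c, Z c ≠ 0 → isE c) (M : ℤ) (hM : ∀ c, Z c ≠ 0 → M ≤ c.2)
    (hb : ∀ v, isV v → bd1 Z v = 0) : ∃ D : Cell → ZMod 2, ∀ e, isE e → bd2 D e = Z e := by
  have hZ0 : ∀ c, ¬ isE c → Z c = 0 := fun c hc => by
    by_contra hne; exact hc (hZ c hne)
  have hM0 : ∀ i j, j < M → Z (i, j) = 0 := fun i j hc => by
    by_contra hne; have := hM _ hne; dsimp only at this; omega
  let S : ℤ → ℤ → ZMod 2 := fun i j => ∑ n ∈ Finset.Icc M j, Z (i, n)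
  have hS0 : ∀ i j, j < M → S i j = 0 := by
    intro i j hj
    simp only [S]
    rw [Finset.Icc_eq_empty (by omega), Finset.sum_empty]
  have hS : ∀ i j, S i (j + 1) = S i j + Z (i, j + 1) := by
    intro i j
    by_cases hj : M ≤ j + 1
    · simp only [S]
      have : Finset.Icc M (j + 1) = insert (j + 1) (Finset.Icc M j) := by
        ext n; simp only [Finset.mem_Icc, Finset.mem_insert]; omega
      rw [this, Finset.sum_insert (by simp), add_comm]
    · rw [hS0 _ _ (by omega), hS0 _ _ (by omega), hM0 _ _ (by omega), add_zero]
  have hQ : ∀ m, m % 2 = 0 → ∀ j, S (m - 1) j + S (m + 1) j = Z (m, j) + Z (m, j + 1) := by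
    intro m hm j
    by_cases hj : j < M - 1
    · rw [hS0 _ _ (by omega), hS0 _ _ (by omega), hM0 _ _ (by omega), hM0 _ _ (by omega)]
    · replace hj : M - 2 ≤ j := by omega
      induction j, hj using Int.leInduction with
      | base =>
        rw [hS0 _ _ (by omega), hS0 _ _ (by omega), hM0 _ _ (by omega), hM0 _ _ (by omega)]
      | succ j hj ih =>
        rw [hS, hS]
        have e1 : S (m - 1) j + Z (m - 1, j + 1) + (S (m + 1) j + Z (m + 1, j + 1)) =
            (S (m - 1) j + S (m + 1) j) + (Z (m - 1, j + 1) + Z (m + 1, j + 1)) := by ring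
        rw [e1, ih]
        rcases Int.emod_two_eq_zero_or_one j with hj2 | hj2
        · rw [hZ0 (m - 1, j + 1) (by unfold isE; dsimp only; omega),
            hZ0 (m + 1, j + 1) (by unfold isE; dsimp only; omega),
            hZ0 (m, j) (by unfold isE; dsimp only; omega),
            hZ0 (m, j + 1 + 1) (by unfold isE; dsimp only; omega)]
          ring
        · have hv := hb (m, j + 1) (by unfold isV; dsimp only; omega)
          unfold bd1 at hv
          dsimp only at hv
          rw [hZ0 (m, j + 1) (by unfold isE; dsimp only; omega)]
          have e2 : j + 1 - 1 = j := by ring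
          rw [e2] at hv
          apply z2_eq
          refine Eq.trans ?_ hv; ring
  refine ⟨fun c => S c.1 c.2, ?_⟩
  intro e he
  obtain ⟨a, b⟩ := e
  unfold isE at he
  dsimp only at he
  rcases Int.emod_two_eq_zero_or_one a with ha | ha
  · have hn : ¬ a % 2 = 1 := by omega
    simp only [bd2, sd1, sd2, if_neg hn]
    rw [hQ a ha, hZ0 (a, b + 1) (by unfold isE; dsimp only; omega), add_zero]
  · simp only [bd2, sd1, sd2, if_pos ha]
    have h1 := hS a b
    have h2 := hS a (b - 1)
    rw [sub_add_cancel] at h2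
    rw [hZ0 (a, b + 1) (by unfold isE; dsimp only; omega), add_zero] at h1
    rw [h1, h2, ← add_assoc, z2, zero_add]

/-- homologous vertices -/
def Hm (L : Set Cell) (v w : Cell) : Prop := ∃ δ : Cell → ZMod 2, (∀ c, δ c ≠ 0 → c ∈ L ∧ isE c) ∧
  ∀ c, isV c → bd1 δ c = (if c = v then 1 else 0) + (if c = w then 1 else 0)

lemma bd1_add (y z : Cell → ZMod 2) (v : Cell) :
    bd1 (fun c => y c + z c) v = bd1 y v + bd1 z v := by
  unfold bd1; ring

lemma Hm.symm {L : Set Cell} {v w : Cell} (h : Hm L v w) : Hm L w v := by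
  obtain ⟨δ, h1, h2⟩ := h
  exact ⟨δ, h1, fun c hc => by rw [h2 c hc, add_comm]⟩

lemma Hm.trans {L : Set Cell} {v w x : Cell} (h : Hm L v w) (h' : Hm L w x) : Hm L v x := by
  obtain ⟨δ, h1, h2⟩ := h
  obtain ⟨δ', h1', h2'⟩ := h'
  refine ⟨fun c => δ c + δ' c, ?_, ?_⟩
  · intro c hc
    by_cases h : δ c = 0
    · exact h1' c (by intro h'; simp [h, h'] at hc)
    · exact h1 c h
  · intro c hc
    rw [bd1_add, h2 c hc, h2' c hc]
    have := z2 (if c = w then 1 else 0)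
    rw [add_assoc, ← add_assoc (if c = w then 1 else 0), this, zero_add]

lemma Hm.refl (L : Set Cell) (v : Cell) : Hm L v v :=
  ⟨fun _ => 0, fun c hc => absurd rfl hc, fun c _ => by rw [z2]; simp [bd1]⟩

lemma Hm.edge {L : Set Cell} {e : Cell} (he : e ∈ L) (hE : isE e) : Hm L (en1 e) (en2 e) := by
  classical
  refine ⟨fun c => if c = e then 1 else 0, ?_, ?_⟩
  · intro c hc
    have : c = e := by by_contra h; exact hc (if_neg h)
    rw [this]; exact ⟨he, hE⟩
  · intro c hc
    rw [bd1_eq_sum {e} (by simpa using hE) _ (by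
      intro c hc
      have : c = e := by by_contra h; exact hc (if_neg h)
      simp [this]) hc]
    rw [Finset.filter_singleton]
    have hne := en_ne e
    by_cases h1 : c = en1 e
    · have : lec c e := h1 ▸ (en1_lec hE).1
      rw [if_pos this, h1]; simp [hne]
    · by_cases h2 : c = en2 e
      · have : lec c e := h2 ▸ (en2_lec hE).1
        rw [if_pos this, h2]; simp [hne.symm]
      · have : ¬ lec c e := by
          intro hl
          rcases lec_E' hE hl with h | h | h
          · exact isV_not_isE hc (h ▸ hE)
          · exact h1 h
          · exact h2 h
        rw [if_neg this, if_neg h1, if_neg h2]; simp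

lemma Hm_of_comp (g : Grid) {L : Set Cell} (hL : Dn L) {x y : Plane} (hx : g.κ x ∈ L)
    (hy : g.κ y ∈ L) (h : g.cc L x = g.cc L y) : Hm L (bot2 (g.κ x)) (bot2 (g.κ y)) := by
  have hcon : ∀ e ∈ L, isE e → {w | Hm L (en1 e) w} = {w | Hm L (en2 e) w} := by
    intro e he hE
    ext w
    exact ⟨fun h => (Hm.edge he hE).symm.trans h, fun h => (Hm.edge he hE).trans h⟩
  have := g.comp_const (S := L) (fun c => {w | Hm L (bot2 c) w})
    (fun c _ d hd hcd => bot_const hL (fun c => {w | Hm L c w}) hcon hd hcd)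
    (C := g.cc L x) isPreconnected_connectedComponentIn (connectedComponentIn_subset _ _)
    (mem_connectedComponentIn hx) (by rw [h]; exact mem_connectedComponentIn hy)
  have h2 : bot2 (g.κ y) ∈ {w | Hm L (bot2 (g.κ x)) w} := by
    rw [this]; exact Hm.refl _ _
  exact h2

lemma parity (E : Finset Cell) (hE : ∀ e ∈ E, isE e) (Z : Cell → ZMod 2)
    (hZ : ∀ c, Z c ≠ 0 → c ∈ E) (n : ZMod 2) (w : Cell) (hw : isV w)
    (hb : ∀ c, isV c → bd1 Z c = if c = w then n else 0) : n = 0 := by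
  classical
  set V : Finset Cell := insert w (E.image en1 ∪ E.image en2) with hV
  have hVV : ∀ v ∈ V, isV v := by
    intro v hv
    simp only [hV, Finset.mem_insert, Finset.mem_union, Finset.mem_image] at hv
    rcases hv with rfl | ⟨e, he, rfl⟩ | ⟨e, he, rfl⟩
    · exact hw
    · exact (en1_lec (hE e he)).2
    · exact (en2_lec (hE e he)).2
  have h1 : ∑ v ∈ V, bd1 Z v = n := by
    rw [Finset.sum_congr rfl (fun v hv => hb v (hVV v hv))]
    simp [hV]
  have h2 : ∑ v ∈ V, bd1 Z v = 0 := by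
    rw [Finset.sum_congr rfl (fun v hv => bd1_eq_sum E hE Z hZ (hVV v hv))]
    simp only [Finset.sum_filter]
    rw [Finset.sum_comm]
    apply Finset.sum_eq_zero
    intro e he
    rw [← Finset.sum_filter]
    have : V.filter (fun v => lec v e) = {en1 e, en2 e} := by
      ext v
      simp only [Finset.mem_filter, Finset.mem_insert, Finset.mem_singleton]
      constructor
      · rintro ⟨hv, hl⟩
        rcases lec_E' (hE e he) hl with h | h | h
        · exact absurd (h ▸ hE e he) (isV_not_isE (hVV v hv))
        · exact Or.inl h
        · exact Or.inr h
      · rintro (rfl | rfl)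
        · refine ⟨?_, (en1_lec (hE e he)).1⟩
          simp only [hV, Finset.mem_insert, Finset.mem_union, Finset.mem_image]
          exact Or.inr (Or.inl ⟨e, he, rfl⟩)
        · refine ⟨?_, (en2_lec (hE e he)).1⟩
          simp only [hV, Finset.mem_insert, Finset.mem_union, Finset.mem_image]
          exact Or.inr (Or.inr ⟨e, he, rfl⟩)
    rw [this, Finset.sum_pair (en_ne e), z2]
  rw [← h1, h2]


lemma OC_inter {A B : Set Cell} (hA : Dn A) (hB : Dn B) : OC (A ∩ B) :=
  fun _ _ _ _ hbc _ hc => ⟨hA _ _ hbc hc.1, hB _ _ hbc hc.2⟩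
lemma OC_sdiff {A B : Set Cell} (hA : Dn A) (hB : Dn B) : OC (A \ B) :=
  fun _ _ _ hab hbc ha hc => ⟨hA _ _ hbc hc.1, fun h => ha.2 (hB _ _ hab h)⟩
lemma OC_compl {A B : Set Cell} (hA : Dn A) (hB : Dn B) : OC (Aᶜ ∩ Bᶜ) :=
  fun _ _ _ hab _ ha _ => ⟨fun h => ha.1 (hA _ _ hab h), fun h => ha.2 (hB _ _ hab h)⟩

lemma bd1_sum {ι : Type*} (W : Finset ι) (δ : ι → Cell → ZMod 2) (v : Cell) :
    bd1 (fun c => ∑ w ∈ W, δ w c) v = ∑ w ∈ W, bd1 (δ w) v := by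
  simp only [bd1, Finset.sum_add_distrib]

lemma bd1_congr {y z : Cell → ZMod 2} {v : Cell} (hv : isV v)
    (h : ∀ e, isE e → lec v e → y e = z e) : bd1 y v = bd1 z v := by
  obtain ⟨a, b⟩ := v
  unfold isV at hv
  dsimp only at hv
  unfold bd1
  dsimp only
  rw [h (a - 1, b), h (a + 1, b), h (a, b - 1), h (a, b + 1)] <;>
    (try unfold isE) <;> (try unfold lec le1) <;> dsimp only <;> omega

lemma bd1_ne {z : Cell → ZMod 2} {v : Cell} (hv : isV v) (h : bd1 z v ≠ 0) :
    ∃ e, isE e ∧ lec v e ∧ z e ≠ 0 := by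
  by_contra hcon
  push Not at hcon
  apply h
  rw [bd1_congr (z := fun _ => 0) hv hcon]
  simp [bd1]

lemma H1Z (g : Grid) {A B : Set Cell} (h : Cfg A B) (hr : Reg g A B) (z : Cell → ZMod 2)
    (hz : ∀ c, z c ≠ 0 → c ∈ (A ∪ B) \ (A ∩ B) ∧ isE c)
    (hb : ∀ v ∈ (A ∪ B) \ (A ∩ B), isV v → bd1 z v = 0) {C : Set Plane}
    (hC : IsCompOf C (g.real (A \ B))) :
    ∃ Z : Cell → ZMod 2, (∀ c, Z c ≠ 0 → c ∈ A ∧ isE c) ∧ (∀ v, isV v → bd1 Z v = 0) ∧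
      ∀ e ∈ A \ B, g.cc (A \ B) (g.pt e) = C → Z e = z e := by
  classical
  have oS := OC_sdiff h.dnA h.dnB
  have oL := OC_inter h.dnA h.dnB
  have hDnL : Dn (A ∩ B) := fun c d hcd hd => ⟨h.dnA c d hcd hd.1, h.dnB c d hcd hd.2⟩
  obtain ⟨T, ⟨⟨x0, hx0, hT⟩, -⟩, huniq⟩ := (hr C hC).1
  set zC : Cell → ZMod 2 := fun c => if c ∈ A \ B ∧ g.cc (A \ B) (g.pt c) = C then z c else 0
    with hzC
  have hzC' : ∀ c, zC c ≠ 0 → (c ∈ A \ B ∧ g.cc (A \ B) (g.pt c) = C) ∧ z c ≠ 0 := by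
    intro c hc
    by_cases hh : c ∈ A \ B ∧ g.cc (A \ B) (g.pt c) = C
    · rw [hzC] at hc
      simp only [if_pos hh] at hc
      exact ⟨hh, hc⟩
    · exact absurd (if_neg hh) hc
  have hW : ∀ v, isV v → bd1 zC v ≠ 0 → v ∈ A ∩ B ∧ g.cc (A ∩ B) (g.pt v) = T := by
    intro v hv hne
    obtain ⟨e, heE, hle, hze⟩ := bd1_ne hv hne
    obtain ⟨⟨heS, heC⟩, hze'⟩ := hzC' e hze
    have hvA : v ∈ A := h.dnA _ _ hle heS.1
    have hvB : v ∈ B := by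
      by_contra hvB
      apply hne
      have hvC : g.cc (A \ B) (g.pt v) = C := by
        rw [← heC]
        apply g.cc_eq oS <;> simp only [g.κ_pt]
        · exact ⟨hvA, hvB⟩
        · exact heS
        · exact hle
      rw [bd1_congr (z := z) hv, hb v ⟨Or.inl hvA, fun h' => hvB h'.2⟩ hv]
      intro e' he' hl'
      by_cases hz0 : z e' = 0
      · rw [hzC]; simp [hz0]
      · have he'T := (hz e' hz0).1
        have he'B : e' ∉ B := fun h' => hvB (h.dnB _ _ hl' h')
        have he'A : e' ∈ A := he'T.1.resolve_right he'B
        have : g.cc (A \ B) (g.pt e') = C := by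
          rw [← hvC]
          symm
          apply g.cc_eq oS <;> simp only [g.κ_pt]
          · exact ⟨hvA, hvB⟩
          · exact ⟨he'A, he'B⟩
          · exact hl'
        rw [hzC]
        exact if_pos ⟨⟨he'A, he'B⟩, this⟩
    refine ⟨⟨hvA, hvB⟩, ?_⟩
    obtain ⟨e', f, he', he'E, hve', hf, he'f, hef⟩ := h.corner ⟨hvA, hvB⟩ hv heS heE hle
    have hfC : g.cc (A \ B) (g.pt f) = C := by
      rw [← heC]; symm
      apply g.cc_eq oS <;> simp only [g.κ_pt]
      · exact heS
      · exact hf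
      · exact hef
    have hsh : SharesEdge (g.cc (A ∩ B) (g.pt e')) (g.cc (A \ B) (g.pt f)) := by
      apply g.shares oL oS <;> simp only [g.κ_pt]
      · exact he'
      · exact hf
      · exact he'E
      · exact he'f
    rw [hfC] at hsh
    have hmem : g.pt e' ∈ g.real (A ∩ B) := by
      change g.κ (g.pt e') ∈ A ∩ B; rw [g.κ_pt]; exact he'
    rw [← huniq _ ⟨⟨_, hmem, rfl⟩, hsh⟩]
    change _ = g.cc (A ∩ B) (g.pt e')
    apply g.cc_eq oL <;> simp only [g.κ_pt]
    · exact ⟨hvA, hvB⟩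
    · exact he'
    · exact hve'
  set w0 := bot2 (g.κ x0) with hw0
  have hw0V : isV w0 := (bot2_lec _).2
  have hHm : ∀ v, isV v → bd1 zC v ≠ 0 → Hm (A ∩ B) v w0 := by
    intro v hv hne
    obtain ⟨h1, h2⟩ := hW v hv hne
    have := Hm_of_comp g hDnL (x := g.pt v) (y := x0) (by rw [g.κ_pt]; exact h1) hx0
      (by rw [h2, hT]; rfl)
    rwa [g.κ_pt, bot2_V hv] at this
  have hWfin : {v | isV v ∧ bd1 zC v ≠ 0}.Finite :=
    h.finA.subset fun v hv => (hW v hv.1 hv.2).1.1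
  set W := hWfin.toFinset with hWdef
  have memW : ∀ v, v ∈ W ↔ isV v ∧ bd1 zC v ≠ 0 := by
    intro v; rw [hWdef, Set.Finite.mem_toFinset]; rfl
  have hHm' : ∀ v, ∃ δ : Cell → ZMod 2, v ∈ W → (∀ c, δ c ≠ 0 → c ∈ A ∩ B ∧ isE c) ∧
      ∀ c, isV c → bd1 δ c = (if c = v then 1 else 0) + (if c = w0 then 1 else 0) := by
    intro v
    by_cases hv : v ∈ W
    · obtain ⟨δ, hδ⟩ := hHm v ((memW v).1 hv).1 ((memW v).1 hv).2
      exact ⟨δ, fun _ => hδ⟩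
    · exact ⟨0, fun h => absurd h hv⟩
  choose δ hδ using hHm'
  set Δ : Cell → ZMod 2 := fun c => ∑ v ∈ W, δ v c with hΔ
  have hΔs : ∀ c, Δ c ≠ 0 → c ∈ A ∩ B ∧ isE c := by
    intro c hc
    obtain ⟨v, hv, hne⟩ := Finset.exists_ne_zero_of_sum_ne_zero hc
    exact (hδ v hv).1 c hne
  have hZs : ∀ c, zC c + Δ c ≠ 0 → c ∈ A ∧ isE c := by
    intro c hc
    by_cases h0 : zC c = 0
    · rw [h0, zero_add] at hc
      exact ⟨(hΔs c hc).1.1, (hΔs c hc).2⟩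
    · obtain ⟨⟨h1, -⟩, h2⟩ := hzC' c h0
      exact ⟨h1.1, (hz c h2).2⟩
  have hbZ : ∀ c, isV c → bd1 (fun c => zC c + Δ c) c =
      if c = w0 then ((W.card : ℕ) : ZMod 2) else 0 := by
    intro c hc
    have e1 : bd1 Δ c = (∑ v ∈ W, if c = v then 1 else 0) + ∑ v ∈ W, if c = w0 then 1 else 0 := by
      rw [hΔ, bd1_sum, ← Finset.sum_add_distrib]
      exact Finset.sum_congr rfl fun v hv => (hδ v hv).2 c hc
    have e2 : (∑ v ∈ W, if c = v then (1 : ZMod 2) else 0) = bd1 zC c := by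
      rw [Finset.sum_ite_eq]
      by_cases h0 : bd1 zC c = 0
      · rw [if_neg (fun hm => ((memW c).1 hm).2 h0), h0]
      · rw [if_pos ((memW c).2 ⟨hc, h0⟩), z2_ne h0]
    rw [bd1_add, e1, e2, ← add_assoc, z2, zero_add, Finset.sum_const]
    split_ifs <;> simp
  have hEfin : {c | c ∈ A ∧ isE c}.Finite := h.finA.subset fun c hc => hc.1
  have hn := parity hEfin.toFinset (fun e he => ((Set.Finite.mem_toFinset _).1 he).2)
    (fun c => zC c + Δ c) (fun c hc => (Set.Finite.mem_toFinset _).2 (hZs c hc)) _ w0 hw0V hbZ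
  refine ⟨fun c => zC c + Δ c, hZs, ?_, ?_⟩
  · intro v hv
    rw [hbZ v hv, hn, ite_self]
  · intro e he heC
    have h0 : Δ e = 0 := by
      by_contra hne; exact he.2 (hΔs e hne).1.2
    have h1 : zC e = z e := if_pos ⟨he, heC⟩
    dsimp only
    rw [h0, h1, add_zero]

open Classical in
lemma H1C (g : Grid) {A B : Set Cell} (h : Cfg A B) (hr : Reg g A B) (z : Cell → ZMod 2)
    (hz : ∀ c, z c ≠ 0 → c ∈ (A ∪ B) \ (A ∩ B) ∧ isE c)
    (hb : ∀ v ∈ (A ∪ B) \ (A ∩ B), isV v → bd1 z v = 0) {C : Set Plane}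
    (hC : IsCompOf C (g.real (A \ B))) :
    ∃ Dc : Cell → ZMod 2, ∀ e ∈ A \ B, isE e → g.cc (A \ B) (g.pt e) = C →
      (if sd1 e ∈ A \ B then Dc (sd1 e) else 0) + (if sd2 e ∈ A \ B then Dc (sd2 e) else 0)
        = z e := by
  have oS := OC_sdiff h.dnA h.dnB
  have oN := OC_compl h.dnA h.dnB
  obtain ⟨Z, hZ, hbZ, hZz⟩ := H1Z g h hr z hz hb hC
  obtain ⟨M, hM⟩ := (h.finA.image Prod.snd).bddBelow
  obtain ⟨D0, hD0⟩ := fill Z (fun c hc => (hZ c hc).2) M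
    (fun c hc => hM (mem_image_of_mem _ (hZ c hc).1)) hbZ
  obtain ⟨N, ⟨⟨x1, hx1, hN⟩, -⟩, huniq⟩ := (hr C hC).2
  have hUp : Up (Aᶜ ∩ Bᶜ) :=
    fun c d hcd hc => ⟨fun hd => hc.1 (h.dnA c d hcd hd), fun hd => hc.2 (h.dnB c d hcd hd)⟩
  have hcon : ∀ e ∈ Aᶜ ∩ Bᶜ, isE e → D0 (sd1 e) = D0 (sd2 e) := by
    intro e he hE
    apply z2_eq
    have h1 := hD0 e hE
    have h2 : Z e = 0 := by
      by_contra hne; exact he.1 (hZ e hne).1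
    rw [h2] at h1; exact h1
  set n := D0 (top2 (g.κ x1)) with hn
  have hside : ∀ e ∈ A \ B, isE e → g.cc (A \ B) (g.pt e) = C → ∀ f, isF f → lec e f →
      f ∉ A \ B → D0 f = n := by
    intro e he hE heC f hfF hef hf
    have hfB : f ∉ B := fun h' => he.2 (h.dnB _ _ hef h')
    have hfA : f ∉ A := fun h' => hf ⟨h', hfB⟩
    have hfN : f ∈ Aᶜ ∩ Bᶜ := ⟨hfA, hfB⟩
    have hsh : SharesEdge (g.cc (A \ B) (g.pt e)) (g.cc (Aᶜ ∩ Bᶜ) (g.pt f)) := by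
      apply g.shares oS oN <;> simp only [g.κ_pt]
      · exact he
      · exact hfN
      · exact hE
      · exact hef
    rw [heC] at hsh
    have hsh' : SharesEdge (g.cc (Aᶜ ∩ Bᶜ) (g.pt f)) C := by
      unfold SharesEdge at hsh ⊢; rwa [inter_comm]
    have hmem : g.pt f ∈ g.real (Aᶜ ∩ Bᶜ) := by
      change g.κ (g.pt f) ∈ Aᶜ ∩ Bᶜ; rw [g.κ_pt]; exact hfN
    have heq : g.cc (Aᶜ ∩ Bᶜ) (g.pt f) = N := huniq _ ⟨⟨_, hmem, rfl⟩, hsh'⟩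
    have := g.comp_const (S := Aᶜ ∩ Bᶜ) (fun c => D0 (top2 c))
      (fun c hc d _ hcd => top_const hUp D0 hcon hc hcd)
      (C := N) (by rw [hN]; exact isPreconnected_connectedComponentIn)
      (by rw [hN]; exact connectedComponentIn_subset _ _)
      (x := g.pt f) (y := x1) (by rw [← heq]; exact mem_connectedComponentIn hmem)
      (by rw [hN]; exact mem_connectedComponentIn hx1)
    rw [g.κ_pt] at this
    try dsimp only at this
    rwa [top2_F hfF] at this
  refine ⟨fun f => D0 f + n, ?_⟩
  intro e he hE heC
  have key : ∀ f, isF f → lec e f → (if f ∈ A \ B then D0 f + n else 0) = D0 f + n := by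
    intro f hf hef
    split_ifs with hin
    · rfl
    · rw [hside e he hE heC f hf hef hin, z2]
  dsimp only
  rw [key _ (sd1_lec hE).2 (sd1_lec hE).1, key _ (sd2_lec hE).2 (sd2_lec hE).1, ← hZz e he heC,
    ← hD0 e hE]
  unfold bd2
  have := z2 n
  generalize D0 (sd1 e) = a
  generalize D0 (sd2 e) = b
  generalize n = m
  revert a b m; decide

lemma H1half (g : Grid) {A B : Set Cell} (h : Cfg A B) (hr : Reg g A B) (z : Cell → ZMod 2)
    (hz : ∀ c, z c ≠ 0 → c ∈ (A ∪ B) \ (A ∩ B) ∧ isE c)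
    (hb : ∀ v ∈ (A ∪ B) \ (A ∩ B), isV v → bd1 z v = 0) :
    ∃ D : Cell → ZMod 2, (∀ c, D c ≠ 0 → c ∈ A \ B ∧ isF c) ∧
      ∀ e ∈ A \ B, isE e → bd2 D e = z e := by
  classical
  have oS := OC_sdiff h.dnA h.dnB
  have hex : ∀ C : Set Plane, ∃ Dc : Cell → ZMod 2, IsCompOf C (g.real (A \ B)) →
      ∀ e ∈ A \ B, isE e → g.cc (A \ B) (g.pt e) = C →
      (if sd1 e ∈ A \ B then Dc (sd1 e) else 0) + (if sd2 e ∈ A \ B then Dc (sd2 e) else 0)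
        = z e := by
    intro C
    by_cases hC : IsCompOf C (g.real (A \ B))
    · obtain ⟨Dc, hDc⟩ := H1C g h hr z hz hb hC
      exact ⟨Dc, fun _ => hDc⟩
    · exact ⟨0, fun h' => absurd h' hC⟩
  choose Dc hDc using hex
  refine ⟨fun f => if f ∈ A \ B ∧ isF f then Dc (g.cc (A \ B) (g.pt f)) f else 0, ?_, ?_⟩
  · intro c hc
    by_contra hne
    exact hc (if_neg hne)
  · intro e he hE
    have hmem : g.pt e ∈ g.real (A \ B) := by
      change g.κ (g.pt e) ∈ A \ B; rw [g.κ_pt]; exact he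
    rw [← hDc (g.cc (A \ B) (g.pt e)) ⟨_, hmem, rfl⟩ e he hE rfl]
    have key : ∀ f, isF f → lec e f →
        (if f ∈ A \ B ∧ isF f then Dc (g.cc (A \ B) (g.pt f)) f else 0) =
        if f ∈ A \ B then Dc (g.cc (A \ B) (g.pt e)) f else 0 := by
      intro f hf hef
      by_cases hin : f ∈ A \ B
      · rw [if_pos ⟨hin, hf⟩, if_pos hin]
        have : g.cc (A \ B) (g.pt e) = g.cc (A \ B) (g.pt f) := by
          apply g.cc_eq oS <;> simp only [g.κ_pt]
          · exact he
          · exact hin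
          · exact hef
        rw [this]
      · rw [if_neg (fun h' => hin h'.1), if_neg hin]
    unfold bd2
    dsimp only
    rw [key _ (sd1_lec hE).2 (sd1_lec hE).1, key _ (sd2_lec hE).2 (sd2_lec hE).1]

lemma acyc_of_reg (g : Grid) {A B : Set Cell} (h : Cfg A B) (hr : Reg g A B) (hr' : Reg g B A) :
    Acyc ((A ∪ B) \ (A ∩ B)) := by
  have hcomm : (B ∪ A) \ (B ∩ A) = (A ∪ B) \ (A ∩ B) := by rw [union_comm, inter_comm]
  have hsplit : ∀ c ∈ (A ∪ B) \ (A ∩ B), c ∈ A \ B ∨ c ∈ B \ A := by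
    rintro c ⟨hc | hc, hn⟩
    · exact Or.inl ⟨hc, fun h' => hn ⟨hc, h'⟩⟩
    · exact Or.inr ⟨hc, fun h' => hn ⟨h', hc⟩⟩
  refine ⟨?_, ?_, ?_⟩
  · intro D hD hb c
    by_contra hne
    obtain ⟨hcT, hcF⟩ := hD c hne
    rcases hsplit c hcT with hc | hc
    · exact hne (H2half g h hr D hD hb c hc hcF)
    · exact hne (H2half g h.symm hr' D (by rw [hcomm]; exact hD) (by rw [hcomm]; exact hb) c hc hcF)
  · intro z hz hb
    obtain ⟨D1, hD1, hb1⟩ := H1half g h hr z hz hb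
    obtain ⟨D2, hD2, hb2⟩ := H1half g h.symm hr' z (by rw [hcomm]; exact hz)
      (by rw [hcomm]; exact hb)
    refine ⟨fun c => D1 c + D2 c, ?_, ?_⟩
    · intro c hc
      by_cases h1 : D1 c = 0
      · have h2 := hD2 c (fun h2 => hc (by dsimp only; rw [h1, h2, add_zero]))
        exact ⟨⟨Or.inr h2.1.1, fun h' => h2.1.2 h'.1⟩, h2.2⟩
      · have h2 := hD1 c h1
        exact ⟨⟨Or.inl h2.1.1, fun h' => h2.1.2 h'.2⟩, h2.2⟩
    · intro e he hE
      have hadd : bd2 (fun c => D1 c + D2 c) e = bd2 D1 e + bd2 D2 e := by unfold bd2; ring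
      rw [hadd]
      have zero : ∀ {A' B' : Set Cell}, Dn B' → ∀ D : Cell → ZMod 2,
          (∀ c, D c ≠ 0 → c ∈ B' \ A' ∧ isF c) → e ∉ B' → bd2 D e = 0 := by
        intro A' B' hB' D hD heB
        have : ∀ f, lec e f → D f = 0 := by
          intro f hf
          by_contra hne
          exact heB (hB' _ _ hf (hD f hne).1.1)
        unfold bd2
        rw [this _ (sd1_lec hE).1, this _ (sd2_lec hE).1, add_zero]
      rcases hsplit e he with hc | hc
      · rw [hb1 e hc hE, zero h.dnB D2 hD2 hc.2, add_zero]
      · rw [hb2 e hc hE, zero h.dnA D1 hD1 hc.2, zero_add]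
  · intro φ hφ hcb c
    by_contra hne
    obtain ⟨hcT, hcF⟩ := hφ c hne
    rcases hsplit c hcT with hc | hc
    · exact hne (H0half g h hr φ hφ hcb c hc hcF)
    · exact hne (H0half g h.symm hr' φ (by rw [hcomm]; exact hφ) (by rw [hcomm]; exact hcb) c hc hcF)


/-! ### The concrete grid -/

def gu (ε : ℝ) (i : ℤ) : ℝ := ((i / 4 : ℤ) : ℝ) +
  (if i % 4 = 0 then -(2 * ε) else if i % 4 = 1 then -ε else if i % 4 = 2 then ε else 2 * ε)

lemma gu0 (ε : ℝ) (q : ℤ) : gu ε (4 * q) = q - 2 * ε := by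
  have h1 : (4 * q) / 4 = q := by omega
  have h2 : (4 * q) % 4 = 0 := by omega
  simp only [gu, h1, h2, if_true]; ring
lemma gu1 (ε : ℝ) (q : ℤ) : gu ε (4 * q + 1) = q - ε := by
  have h1 : (4 * q + 1) / 4 = q := by omega
  have h2 : (4 * q + 1) % 4 = 1 := by omega
  simp only [gu, h1, h2]; norm_num; ring
lemma gu2 (ε : ℝ) (q : ℤ) : gu ε (4 * q + 2) = q + ε := by
  have h1 : (4 * q + 2) / 4 = q := by omega
  have h2 : (4 * q + 2) % 4 = 2 := by omega
  simp only [gu, h1, h2]; norm_num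
lemma gu3 (ε : ℝ) (q : ℤ) : gu ε (4 * q + 3) = q + 2 * ε := by
  have h1 : (4 * q + 3) / 4 = q := by omega
  have h2 : (4 * q + 3) % 4 = 3 := by omega
  simp only [gu, h1, h2]; norm_num

lemma gu4 (ε : ℝ) (q : ℤ) : gu ε (4 * q + 3 + 1) = q + 1 - 2 * ε := by
  have : 4 * q + 3 + 1 = 4 * (q + 1) := by ring
  rw [this, gu0]; push_cast; ring

lemma gu_mono {ε : ℝ} (h0 : 0 < ε) (h1 : ε < 1 / 4) : StrictMono (gu ε) := by
  apply strictMono_int_of_lt_succ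
  intro i
  have : ∃ q, i = 4 * q ∨ i = 4 * q + 1 ∨ i = 4 * q + 2 ∨ i = 4 * q + 3 := ⟨i / 4, by omega⟩
  obtain ⟨q, rfl | rfl | rfl | rfl⟩ := this
  · rw [gu0, gu1]; linarith
  · rw [show 4 * q + 1 + 1 = 4 * q + 2 by ring, gu1, gu2]; linarith
  · rw [show 4 * q + 2 + 1 = 4 * q + 3 by ring, gu2, gu3]; linarith
  · rw [gu3, gu4]; linarith

lemma gu_ex (ε : ℝ) (x : ℝ) : ∃ i, gu ε i ≤ x ∧ x < gu ε (i + 1) := by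
  set q := ⌊x + 2 * ε⌋ with hq
  have h1 : (q : ℝ) ≤ x + 2 * ε := Int.floor_le _
  have h2 : x + 2 * ε < q + 1 := Int.lt_floor_add_one _
  by_cases c1 : x < q - ε
  · exact ⟨4 * q, by rw [gu0]; linarith, by rw [gu1]; exact c1⟩
  by_cases c2 : x < q + ε
  · refine ⟨4 * q + 1, by rw [gu1]; linarith, ?_⟩
    rw [show 4 * q + 1 + 1 = 4 * q + 2 by ring, gu2]; exact c2
  by_cases c3 : x < q + 2 * ε
  · refine ⟨4 * q + 2, by rw [gu2]; linarith, ?_⟩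
    rw [show 4 * q + 2 + 1 = 4 * q + 3 by ring, gu3]; exact c3
  exact ⟨4 * q + 3, by rw [gu3]; linarith, by rw [gu4]; linarith⟩

lemma gk_ex {u : ℤ → ℝ} (hu : StrictMono u) (hex : ∀ x, ∃ i, u i ≤ x ∧ x < u (i + 1)) (x : ℝ) :
    ∃ k : ℤ, (∀ i, k ≤ 2 * i ↔ x ≤ u i) ∧ ∀ i, 2 * i ≤ k ↔ u i ≤ x := by
  obtain ⟨i, h1, h2⟩ := hex x
  rcases h1.eq_or_lt with h1 | h1
  · refine ⟨2 * i, fun j => ?_, fun j => ?_⟩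
    · rw [← h1, hu.le_iff_le]; omega
    · rw [← h1, hu.le_iff_le]; omega
  · refine ⟨2 * i + 1, fun j => ⟨fun h => ?_, fun h => ?_⟩, fun j => ⟨fun h => ?_, fun h => ?_⟩⟩
    · exact h2.le.trans (hu.monotone (by omega))
    · have := hu.lt_iff_lt.1 (h1.trans_le h); omega
    · exact le_trans (hu.monotone (by omega)) h1.le
    · have := hu.lt_iff_lt.1 (lt_of_le_of_lt h h2); omega

def theGrid {ε : ℝ} (h0 : 0 < ε) (h1 : ε < 1 / 4) : Grid where
  u := gu ε
  k := fun x => (gk_ex (gu_mono h0 h1) (gu_ex ε) x).choose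
  hle := fun x => (gk_ex (gu_mono h0 h1) (gu_ex ε) x).choose_spec.1
  hge := fun x => (gk_ex (gu_mono h0 h1) (gu_ex ε) x).choose_spec.2
  mono := gu_mono h0 h1

def Acells (P : Set (ℕ × ℕ)) : Set Cell := {c | ∃ p ∈ P,
  (8 * (p.1 : ℤ) - 6 ≤ c.1 ∧ c.1 ≤ 8 * (p.1 : ℤ) + 4) ∧
  (8 * (p.2 : ℤ) - 6 ≤ c.2 ∧ c.2 ≤ 8 * (p.2 : ℤ) + 4)}
def Bcells (P : Set (ℕ × ℕ)) : Set Cell := {c | ∃ p ∈ P,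
  (8 * (p.1 : ℤ) - 8 ≤ c.1 ∧ c.1 ≤ 8 * (p.1 : ℤ) + 6) ∧
  (8 * (p.2 : ℤ) - 8 ≤ c.2 ∧ c.2 ≤ 8 * (p.2 : ℤ) + 6)}

lemma clamp_ex {a y ε : ℝ} (hε : 0 ≤ ε) : (∃ x ∈ Icc (a - 1) a, |x - y| ≤ ε) ↔
    a - 1 - ε ≤ y ∧ y ≤ a + ε := by
  constructor
  · rintro ⟨x, ⟨h1, h2⟩, h3⟩
    rw [abs_le] at h3
    constructor <;> linarith
  · rintro ⟨h1, h2⟩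
    rcases le_total y (a - 1) with h | h
    · exact ⟨a - 1, ⟨le_rfl, by linarith⟩, by rw [abs_le]; constructor <;> linarith⟩
    rcases le_total a y with h' | h'
    · exact ⟨a, ⟨by linarith, le_rfl⟩, by rw [abs_le]; constructor <;> linarith⟩
    · exact ⟨y, ⟨h, h'⟩, by simpa using hε⟩

lemma mem_thick {ε : ℝ} (hε : 0 ≤ ε) (P : Set (ℕ × ℕ)) (y : Plane) : y ∈ thick ε (fg P) ↔
    ∃ p ∈ P, ((p.1 : ℝ) - 1 - ε ≤ y 0 ∧ y 0 ≤ (p.1 : ℝ) + ε) ∧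
      ((p.2 : ℝ) - 1 - ε ≤ y 1 ∧ y 1 ≤ (p.2 : ℝ) + ε) := by
  constructor
  · rintro ⟨x, hx, hxy⟩
    simp only [fg, mem_iUnion] at hx
    obtain ⟨p, hp, h0, h1⟩ := hx
    rw [pi_norm_le_iff_of_nonneg hε] at hxy
    exact ⟨p, hp, (clamp_ex hε).1 ⟨_, h0, hxy 0⟩, (clamp_ex hε).1 ⟨_, h1, hxy 1⟩⟩
  · rintro ⟨p, hp, h0, h1⟩
    obtain ⟨x0, hx0, hd0⟩ := (clamp_ex hε).2 h0
    obtain ⟨x1, hx1, hd1⟩ := (clamp_ex hε).2 h1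
    refine ⟨![x0, x1], ?_, ?_⟩
    · simp only [fg, mem_iUnion]
      exact ⟨p, hp, hx0, hx1⟩
    · rw [pi_norm_le_iff_of_nonneg hε]
      intro i
      fin_cases i
      · simpa using hd0
      · simpa using hd1

lemma thick_A {ε : ℝ} (h0 : 0 < ε) (h1 : ε < 1 / 4) (P : Set (ℕ × ℕ)) :
    thick ε (fg P) = (theGrid h0 h1).real (Acells P) := by
  ext y
  rw [mem_thick h0.le]
  have key : ∀ (n : ℕ) (t : ℝ), ((n : ℝ) - 1 - ε ≤ t ∧ t ≤ (n : ℝ) + ε) ↔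
      (8 * (n : ℤ) - 6 ≤ (theGrid h0 h1).k t ∧ (theGrid h0 h1).k t ≤ 8 * (n : ℤ) + 4) := by
    intro n t
    have e1 : 8 * (n : ℤ) - 6 = 2 * (4 * ((n : ℤ) - 1) + 1) := by ring
    have e2 : 8 * (n : ℤ) + 4 = 2 * (4 * (n : ℤ) + 2) := by ring
    rw [e1, e2, (theGrid h0 h1).hle, (theGrid h0 h1).hge]
    change _ ↔ gu ε _ ≤ t ∧ t ≤ gu ε _
    rw [gu1, gu2]; push_cast; rfl
  simp only [key]
  rfl

lemma thick_B {ε : ℝ} (h0 : 0 < ε) (h1 : ε < 1 / 4) (P : Set (ℕ × ℕ)) :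
    thick (2 * ε) (fg P) = (theGrid h0 h1).real (Bcells P) := by
  ext y
  rw [mem_thick (by linarith)]
  have key : ∀ (n : ℕ) (t : ℝ), ((n : ℝ) - 1 - 2 * ε ≤ t ∧ t ≤ (n : ℝ) + 2 * ε) ↔
      (8 * (n : ℤ) - 8 ≤ (theGrid h0 h1).k t ∧ (theGrid h0 h1).k t ≤ 8 * (n : ℤ) + 6) := by
    intro n t
    have e1 : 8 * (n : ℤ) - 8 = 2 * (4 * ((n : ℤ) - 1)) := by ring
    have e2 : 8 * (n : ℤ) + 6 = 2 * (4 * (n : ℤ) + 3) := by ring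
    rw [e1, e2, (theGrid h0 h1).hle, (theGrid h0 h1).hge]
    change _ ↔ gu ε _ ≤ t ∧ t ≤ gu ε _
    rw [gu0, gu3]; push_cast; rfl
  simp only [key]
  rfl

lemma odd_between {l r m : ℤ} (hl : l % 2 = 0) (hr : r % 2 = 0) (hlr : l < r) (h1 : l ≤ m)
    (h2 : m ≤ r) : ∃ n, l ≤ n ∧ n ≤ r ∧ n % 2 = 1 ∧ le1 m n := by
  unfold le1
  by_cases hm : m % 2 = 1
  · exact ⟨m, h1, h2, hm, Or.inl rfl⟩
  by_cases h3 : m = l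
  · exact ⟨m + 1, by omega, by omega, by omega, by omega⟩
  · exact ⟨m - 1, by omega, by omega, by omega, by omega⟩

lemma cells_finite {P : Set (ℕ × ℕ)} {h w : ℕ} (hP : OnGrid P h w) {S : Set Cell}
    (hS : ∀ c ∈ S, ∃ p ∈ P, (8 * (p.1 : ℤ) - 8 ≤ c.1 ∧ c.1 ≤ 8 * (p.1 : ℤ) + 6) ∧
      (8 * (p.2 : ℤ) - 8 ≤ c.2 ∧ c.2 ≤ 8 * (p.2 : ℤ) + 6)) : S.Finite := by
  apply ((Set.finite_Icc (0 : ℤ) (8 * h + 6)).prod (Set.finite_Icc (0 : ℤ) (8 * w + 6))).subset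
  intro c hc
  obtain ⟨p, hp, h1, h2⟩ := hS c hc
  obtain ⟨⟨a1, a2⟩, ⟨b1, b2⟩⟩ := hP hp
  simp only [mem_prod, mem_Icc]
  omega

lemma theCfg {P G : Set (ℕ × ℕ)} {h w : ℕ} (hP : OnGrid P h w) (hG : OnGrid G h w) :
    Cfg (Acells P) (Bcells G) where
  dnA := by
    rintro c d ⟨h1, h2⟩ ⟨p, hp, h3, h4⟩
    unfold le1 at h1 h2
    exact ⟨p, hp, by omega, by omega⟩
  dnB := by
    rintro c d ⟨h1, h2⟩ ⟨p, hp, h3, h4⟩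
    unfold le1 at h1 h2
    exact ⟨p, hp, by omega, by omega⟩
  finA := cells_finite hP (by
    rintro c ⟨p, hp, h1, h2⟩
    exact ⟨p, hp, by omega, by omega⟩)
  finB := cells_finite hG fun c hc => hc
  regA := by
    rintro c ⟨p, hp, h1, h2⟩
    obtain ⟨a, a1, a2, a3, a4⟩ := odd_between (by omega) (by omega) (by omega) h1.1 h1.2
    obtain ⟨b, b1, b2, b3, b4⟩ := odd_between (by omega) (by omega) (by omega) h2.1 h2.2
    exact ⟨(a, b), ⟨p, hp, ⟨a1, a2⟩, ⟨b1, b2⟩⟩, ⟨a3, b3⟩, ⟨a4, b4⟩⟩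
  regB := by
    rintro c ⟨p, hp, h1, h2⟩
    obtain ⟨a, a1, a2, a3, a4⟩ := odd_between (by omega) (by omega) (by omega) h1.1 h1.2
    obtain ⟨b, b1, b2, b3, b4⟩ := odd_between (by omega) (by omega) (by omega) h2.1 h2.2
    exact ⟨(a, b), ⟨p, hp, ⟨a1, a2⟩, ⟨b1, b2⟩⟩, ⟨a3, b3⟩, ⟨a4, b4⟩⟩
  trX := by
    intro m
    by_cases hm : m % 8 = 2 ∨ m % 8 = 4
    · right
      intro n m' hl
      unfold le1 at hl
      constructor
      · rintro ⟨p, hp, h1, h2⟩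
        dsimp only at h1 h2
        exact ⟨p, hp, by dsimp only; omega, h2⟩
      · rintro ⟨p, hp, h1, h2⟩
        dsimp only at h1 h2
        exact ⟨p, hp, by dsimp only; omega, h2⟩
    · left
      intro n m' hl
      unfold le1 at hl
      constructor
      · rintro ⟨p, hp, h1, h2⟩
        dsimp only at h1 h2
        exact ⟨p, hp, by dsimp only; omega, h2⟩
      · rintro ⟨p, hp, h1, h2⟩
        dsimp only at h1 h2
        exact ⟨p, hp, by dsimp only; omega, h2⟩
  trY := by
    intro m
    by_cases hm : m % 8 = 2 ∨ m % 8 = 4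
    · right
      intro n m' hl
      unfold le1 at hl
      constructor
      · rintro ⟨p, hp, h1, h2⟩
        dsimp only at h1 h2
        exact ⟨p, hp, h1, by dsimp only; omega⟩
      · rintro ⟨p, hp, h1, h2⟩
        dsimp only at h1 h2
        exact ⟨p, hp, h1, by dsimp only; omega⟩
    · left
      intro n m' hl
      unfold le1 at hl
      constructor
      · rintro ⟨p, hp, h1, h2⟩
        dsimp only at h1 h2
        exact ⟨p, hp, h1, by dsimp only; omega⟩
      · rintro ⟨p, hp, h1, h2⟩
        dsimp only at h1 h2
        exact ⟨p, hp, h1, by dsimp only; omega⟩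

lemma main_good (h w : ℕ) (P G : Set (ℕ × ℕ)) (hP : OnGrid P h w) (hG : OnGrid G h w)
    (ε : ℝ) (hε0 : 0 < ε) (hε : ε < 1 / 4) (hzero : ZeroLoss P G ε) :
    Good (TPset P G ε) (thick ε (fg P) ∪ thick (2 * ε) (fg G)) := by
  set g := theGrid hε0 hε with hg
  set A := Acells P with hA
  set B := Bcells G with hB
  have tA : thick ε (fg P) = g.real A := thick_A hε0 hε P
  have tB : thick (2 * ε) (fg G) = g.real B := thick_B hε0 hε G
  have hc : Cfg A B := theCfg hP hG
  have eTP : TPset P G ε = g.real (A ∩ B) := by unfold TPset; rw [tA, tB]; rfl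
  have eTN : TNset P G ε = g.real (Aᶜ ∩ Bᶜ) := by unfold TNset; rw [tA, tB]; rfl
  have eFP : FPset P G ε = g.real (A \ B) := by unfold FPset; rw [tA, tB]; rfl
  have eFN : FNset P G ε = g.real (B \ A) := by
    unfold FNset; rw [tA, tB, inter_comm]; rfl
  obtain ⟨z1, z2⟩ := hzero
  unfold RegularComp at z1 z2
  rw [eFP, eTP, eTN] at z1
  rw [eFN, eTP, eTN] at z2
  have r1 : Reg g A B := z1
  have r2 : Reg g B A := by
    unfold Reg
    rw [inter_comm B A, inter_comm Bᶜ Aᶜ]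
    exact z2
  rw [eTP, tA, tB]
  change Good (g.real (A ∩ B)) (g.real (A ∪ B))
  refine g.good_of_acyc ?_ ?_ (fun c hc => Or.inl hc.1) ?_ (acyc_of_reg g hc r1 r2)
  · rintro c d hcd (hd | hd)
    · exact Or.inl (hc.dnA c d hcd hd)
    · exact Or.inr (hc.dnB c d hcd hd)
  · exact fun c d hcd hd => ⟨hc.dnA c d hcd hd.1, hc.dnB c d hcd hd.2⟩
  · exact (hc.finA.union hc.finB).subset sdiff_subset

/-- Under the zero-loss hypothesis, the inclusion of the intersection of the
thickened foregrounds into their union is a homotopy equivalence. -/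
theorem zero_loss_inclusion_homotopyEquiv
    (h w : ℕ) (P G : Set (ℕ × ℕ)) (hP : OnGrid P h w) (hG : OnGrid G h w)
    (ε : ℝ) (hε0 : 0 < ε) (hε : ε < 1 / 4) (hzero : ZeroLoss P G ε) :
    ∃ E : ContinuousMap.HomotopyEquiv ↥(TPset P G ε)
        ↥(thick ε (fg P) ∪ thick (2 * ε) (fg G)),
      ∀ x : ↥(TPset P G ε), ((E.toFun x : Plane)) = (x : Plane) := by
  exact main_good h w P G hP hG ε hε0 hε hzero

end
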